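/- arXiv:1507.03426 — 2 statements merged into one kernel-verified Lean document; each statement's English description precedes it below -/
import Mathlib

section
/- For i ∈ {1,2}, every n ∈ ℕ, and every z ∈ ℂ with z ∉ {0, 1, -1}, one has the matrix-valued Askey–Wilson type q-difference equation M_i(z)·P_n(μ(qz)) + M_i(z⁻¹)·P_n(μ(q⁻¹z)) = P_n(μ(z))·Λ_n(i), where μ(w) = (w + w⁻¹)/2. -/
open Finset Polynomial MeasureTheory Matrix
open scoped BigOperators ComplexOrder

noncomputable section

/-- q-shifted factorial `(a;p)_n`. -/
def qp (a p : ℂ) (n : ℕ) : ℂ := ∏ j ∈ Finset.range n, (1 - a * p ^ j)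

/-- q-Racah polynomial `R_n(μ(x);α,β,γ,δ;p)`. -/
def qRacah (p α β γ δ : ℂ) (n x : ℕ) : ℂ :=
  ∑ k ∈ Finset.range (min n x + 1),
    qp (p ^ (-(n : ℤ))) p k * qp (α * β * p ^ (n + 1)) p k *
        qp (p ^ (-(x : ℤ))) p k * qp (γ * δ * p ^ (x + 1)) p k /
      (qp (α * p) p k * qp (β * δ * p) p k * qp (γ * p) p k * qp p p k) * p ^ k

/-- `IsUltra C` says that for each base `p`, parameter `β` and degree `n`, `C p β n` is
the continuous q-ultraspherical polynomial: it has degree at most `n` and its values at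
`(z+z⁻¹)/2` are given by the symmetric Laurent sum. -/
def IsUltra (C : ℂ → ℂ → ℕ → Polynomial ℂ) : Prop :=
  ∀ (p β : ℂ) (n : ℕ),
    (C p β n).degree ≤ (n : ℕ) ∧
      ∀ z : ℂ, z ≠ 0 →
        (C p β n).eval ((z + z⁻¹) / 2) =
          ∑ r ∈ Finset.range (n + 1),
            qp β p r * qp β p (n - r) / (qp p p r * qp p p (n - r)) * z ^ ((n : ℤ) - 2 * r)

/-- The matrix-valued polynomial `P_n` (entries in `Polynomial ℂ`); here `L = 2ℓ`. -/
def Pm (q : ℂ) (L : ℕ) (C : ℂ → ℂ → ℕ → Polynomial ℂ) (n : ℕ) :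
    Matrix (Fin (L + 1)) (Fin (L + 1)) (Polynomial ℂ) :=
  Matrix.of fun i j =>
    ∑ k ∈ Finset.Icc (i : ℕ) (min L (n + (j : ℕ))),
      Polynomial.C
          ((-1 : ℂ) ^ k *
            q ^ ((n : ℤ) + (2 * (k : ℤ) + 1) * ((k : ℤ) - ((i : ℕ) : ℤ)) +
                ((j : ℕ) : ℤ) * (2 * (k : ℤ) + 1) + 2 * (k : ℤ) * ((L : ℤ) + (n : ℤ) + 1) -
                (k : ℤ) ^ 2) *
            (qp (q ^ 2) (q ^ 2) k * qp (q ^ 2) (q ^ 2) (k + (i : ℕ)) /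
              (qp (q ^ 2) (q ^ 2) (2 * k) * qp (q ^ 2) (q ^ 2) (i : ℕ))) *
            (qp (q ^ (-(2 * (L : ℤ)))) (q ^ 2) k *
                qp (q ^ (-(2 * ((j : ℕ) : ℤ) + 2 * (n : ℤ)))) (q ^ 2) k /
              (qp (q ^ 2) (q ^ 2) k * qp (q ^ (2 * (L : ℤ) + 4)) (q ^ 2) k)) *
            (qp (q ^ 2) (q ^ 2) (n + (j : ℕ) - k) /
              qp (q ^ (4 * (k : ℤ) + 4)) (q ^ 2) (n + (j : ℕ) - k)) *
            qRacah (q ^ 2) 1 1 (q ^ (-(2 * (n : ℤ) + 2 * ((j : ℕ) : ℤ) + 2)))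
              (q ^ (-(2 * (L : ℤ) + 2))) k (j : ℕ)) *
        (C (q ^ 2) (q ^ (-(2 * (k : ℤ)))) (k - (i : ℕ)) *
          C (q ^ 2) (q ^ (2 * (k : ℤ) + 2)) (n + (j : ℕ) - k))

/-- Evaluation of the matrix-valued polynomial `P_n` at a point. -/
def evP (q : ℂ) (L : ℕ) (C : ℂ → ℂ → ℕ → Polynomial ℂ) (n : ℕ) (x : ℂ) :
    Matrix (Fin (L + 1)) (Fin (L + 1)) ℂ :=
  (Pm q L C n).map (Polynomial.eval x)

/-- The coefficients `α_t(m,n)` of the weight. -/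
def alphaC (q : ℂ) (L m n t : ℕ) : ℂ :=
  q ^ (2 * (n : ℤ) * ((L : ℤ) + 1) - (n : ℤ) ^ 2 - (2 * (L : ℤ) + 3) * (t : ℤ) + (t : ℤ) ^ 2 -
      (L : ℤ) + (m : ℤ)) *
    ((1 - q ^ (2 * (L : ℤ) + 2)) / (1 - q ^ (2 * (m : ℤ) + 2))) *
    (qp (q ^ 2) (q ^ 2) (L - n) * qp (q ^ 2) (q ^ 2) n / qp (q ^ 2) (q ^ 2) L) *
    ((-1 : ℂ) ^ ((m : ℤ) - (t : ℤ)) * qp (q ^ (2 * (m : ℤ) - 2 * (L : ℤ))) (q ^ 2) (n - t) /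
      qp (q ^ (2 * (m : ℤ) + 4)) (q ^ 2) (n - t)) *
    (qp (q ^ (2 * (L : ℤ) + 4 - 2 * (t : ℤ))) (q ^ 2) t / qp (q ^ 2) (q ^ 2) t)

/-- The matrix weight `W(x)`. -/
def Wm (q : ℂ) (L : ℕ) (x : ℂ) : Matrix (Fin (L + 1)) (Fin (L + 1)) ℂ :=
  Matrix.of fun i j =>
    ∑ t ∈ Finset.range (max (i : ℕ) (j : ℕ) + 1),
      alphaC q L (min (i : ℕ) (j : ℕ)) (max (i : ℕ) (j : ℕ)) t *
        (Polynomial.Chebyshev.U ℂ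
            ((min (i : ℕ) (j : ℕ) : ℤ) + (max (i : ℕ) (j : ℕ) : ℤ) - 2 * (t : ℤ))).eval x

/-- The antidiagonal involution `J`. -/
def Jm (L : ℕ) : Matrix (Fin (L + 1)) (Fin (L + 1)) ℂ :=
  Matrix.of fun i j => if (i : ℕ) + (j : ℕ) = L then 1 else 0

/-- The diagonal leading-coefficient matrix `Γ_n`. -/
def Gam (q : ℂ) (L n : ℕ) : Matrix (Fin (L + 1)) (Fin (L + 1)) ℂ :=
  Matrix.diagonal fun i =>
    2 ^ n * q ^ n * qp (q ^ (2 * ((i : ℕ) : ℤ) + 2)) (q ^ 2) n *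
        qp (q ^ (2 * (L : ℤ) - 2 * ((i : ℕ) : ℤ) + 2)) (q ^ 2) n /
      (qp (q ^ 2) (q ^ 2) n * qp (q ^ (2 * (L : ℤ) + 4)) (q ^ 2) n)

/-- The squared-norm matrix `G_m`. -/
def Gmat (q : ℂ) (L m : ℕ) : Matrix (Fin (L + 1)) (Fin (L + 1)) ℂ :=
  Matrix.diagonal fun i =>
    q ^ (2 * (m : ℤ) - (L : ℤ)) * (1 - q ^ (2 * (L : ℤ) + 2)) ^ 2 /
      ((1 - q ^ (2 * (m : ℤ) + 2 * ((i : ℕ) : ℤ) + 2)) *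
        (1 - q ^ (2 * (L : ℤ) - 2 * ((i : ℕ) : ℤ) + 2 * (m : ℤ) + 2)))

/-- The unipotent lower triangular matrix `L(x)` of the LDU decomposition. -/
def Lm (q : ℂ) (L : ℕ) (C : ℂ → ℂ → ℕ → Polynomial ℂ) (x : ℂ) :
    Matrix (Fin (L + 1)) (Fin (L + 1)) ℂ :=
  Matrix.of fun m k =>
    if (k : ℕ) ≤ (m : ℕ) then
      q ^ (((m : ℕ) : ℤ) - ((k : ℕ) : ℤ)) * qp (q ^ 2) (q ^ 2) (m : ℕ) *
          qp (q ^ 2) (q ^ 2) (2 * (k : ℕ) + 1) /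
          (qp (q ^ 2) (q ^ 2) ((m : ℕ) + (k : ℕ) + 1) * qp (q ^ 2) (q ^ 2) (k : ℕ)) *
        (C (q ^ 2) (q ^ (2 * (k : ℕ) + 2)) ((m : ℕ) - (k : ℕ))).eval x
    else 0

/-- The claimed inverse of `L(x)`. -/
def Linv (q : ℂ) (L : ℕ) (C : ℂ → ℂ → ℕ → Polynomial ℂ) (x : ℂ) :
    Matrix (Fin (L + 1)) (Fin (L + 1)) ℂ :=
  Matrix.of fun k n =>
    if (n : ℕ) ≤ (k : ℕ) then
      q ^ ((2 * ((k : ℕ) : ℤ) + 1) * (((k : ℕ) : ℤ) - ((n : ℕ) : ℤ))) *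
          qp (q ^ 2) (q ^ 2) (k : ℕ) * qp (q ^ 2) (q ^ 2) ((k : ℕ) + (n : ℕ)) /
          (qp (q ^ 2) (q ^ 2) (2 * (k : ℕ)) * qp (q ^ 2) (q ^ 2) (n : ℕ)) *
        (C (q ^ 2) (q ^ (-(2 * ((k : ℕ) : ℤ)))) ((k : ℕ) - (n : ℕ))).eval x
    else 0

/-- The constants `c_k(ℓ)`. -/
def ckC (q : ℂ) (L k : ℕ) : ℂ :=
  q ^ (-(L : ℤ)) / 4 * (1 - q ^ (4 * k + 2)) * qp (q ^ 2) (q ^ 2) (L + k + 1) *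
      qp (q ^ 2) (q ^ 2) (L - k) * qp (q ^ 2) (q ^ 2) k ^ 4 /
    (qp (q ^ 2) (q ^ 2) (2 * k + 1) ^ 2 * qp (q ^ 2) (q ^ 2) L ^ 2)

/-- The diagonal part `T(x)` of the LDU decomposition. -/
def Tm (q : ℂ) (L : ℕ) (x : ℂ) : Matrix (Fin (L + 1)) (Fin (L + 1)) ℂ :=
  Matrix.diagonal fun k =>
    ckC q L (k : ℕ) *
      (4 * ∏ j ∈ Finset.Icc 1 (k : ℕ), (1 - 2 * (2 * x ^ 2 - 1) * q ^ (2 * j) + q ^ (4 * j)))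

/-- The coefficient matrix `M₁(z)` of the q-difference operator `D₁`. -/
def M1f (q : ℂ) (L : ℕ) (z : ℂ) : Matrix (Fin (L + 1)) (Fin (L + 1)) ℂ :=
  Matrix.of fun i j =>
    if (j : ℕ) = (i : ℕ) + 1 then
      -(q ^ (1 - ((i : ℕ) : ℤ)) * (1 - q ^ (2 * (i : ℕ) + 2)) / (1 - q ^ 2) ^ 2 *
        (z / (1 - z ^ 2)))
    else if (j : ℕ) = (i : ℕ) then
      q ^ (1 - ((i : ℕ) : ℤ)) / (1 - q ^ 2) ^ 2 *
        ((1 - q ^ (2 * (i : ℕ) + 2) * z ^ 2) / (1 - z ^ 2))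
    else 0

/-- `M₂(z) = J M₁(z) J`. -/
def M2f (q : ℂ) (L : ℕ) (z : ℂ) : Matrix (Fin (L + 1)) (Fin (L + 1)) ℂ :=
  Jm L * M1f q L z * Jm L

/-- The eigenvalue matrix `Λ_n(1)`. -/
def Lam1 (q : ℂ) (L n : ℕ) : Matrix (Fin (L + 1)) (Fin (L + 1)) ℂ :=
  Matrix.diagonal fun j =>
    (q ^ (-((j : ℕ) : ℤ) - (n : ℤ) - 1) + q ^ (((j : ℕ) : ℤ) + (n : ℤ) + 1)) / (q⁻¹ - q) ^ 2

/-- The eigenvalue matrix `Λ_n(2) = J Λ_n(1) J`. -/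
def Lam2 (q : ℂ) (L n : ℕ) : Matrix (Fin (L + 1)) (Fin (L + 1)) ℂ :=
  Jm L * Lam1 q L n * Jm L

/-- The diagonal coefficient matrix `K₁(z)` of the decoupled operator. -/
def K1f (q : ℂ) (L : ℕ) (z : ℂ) : Matrix (Fin (L + 1)) (Fin (L + 1)) ℂ :=
  Matrix.diagonal fun i =>
    q ^ (1 - ((i : ℕ) : ℤ)) / (1 - q ^ 2) ^ 2 *
      ((1 - q ^ (2 * (i : ℕ) + 2) * z ^ 2) / (1 - z ^ 2))

/-- The symmetric Laurent polynomial `Ĉ_k(z;β|p)`. -/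
def Chat (p β : ℂ) (k : ℕ) (z : ℂ) : ℂ :=
  ∑ r ∈ Finset.range (k + 1),
    qp β p r * qp β p (k - r) / (qp p p r * qp p p (k - r)) * z ^ ((k : ℤ) - 2 * (r : ℤ))

/-- The matrix polynomials `R_n(x) = L(x)ᵀ P_n(x) Γ_n⁻¹`. -/
def Rmat (q : ℂ) (L : ℕ) (C : ℂ → ℂ → ℕ → Polynomial ℂ) (n : ℕ) (x : ℂ) :
    Matrix (Fin (L + 1)) (Fin (L + 1)) ℂ :=
  (Lm q L C x)ᵀ * evP q L C n x * (Gam q L n)⁻¹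

/-!
At `(z + z⁻¹) / 2` the matrix `P_n` factors as `U(z) V_n(z)`, where `U` is upper unipotent and does
not depend on `n`, and the column `j` of `V_n` consists of q-ultraspherical polynomials multiplied
by q-Racah polynomials in `μ(j)`. Contiguous relations of the q-ultraspherical polynomials show that
`U` intertwines `M_i(z)` with a matrix `K_i(z)`, that is `M_i(z) U(qz) = U(z) K_i(z)`, where `K₁` is
diagonal and `K₂` is tridiagonal. It remains to show
`K_i(z) V_n(qz) + K_i(z⁻¹) V_n(q⁻¹z) = V_n(z) Λ_n(i)`. For `i = 1` this is, entry by entry, the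
Askey–Wilson q-difference equation of the q-ultraspherical polynomials. For `i = 2` the same
equation and the raising and lowering relations reduce the row `k` to the three-term recurrence in
`k` of the q-Racah polynomials.
-/

/-- The genericity assumption on the base `q`: it is nonzero and not a root of unity, so that no
`q`-shifted factorial in a denominator vanishes. -/
structure IsGeneric (q : ℂ) : Prop where
  ne_zero : q ≠ 0
  not_isOfFinOrder : ¬ IsOfFinOrder q

lemma isGeneric_ofReal {q : ℝ} (hq0 : 0 < q) (hq1 : q < 1) : IsGeneric (q : ℂ) where
  ne_zero := by exact_mod_cast hq0.ne'
  not_isOfFinOrder h := by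
    have hnorm : ‖(q : ℂ)‖ = 1 := h.norm_eq_one
    rw [Complex.norm_of_nonneg hq0.le] at hnorm
    exact hq1.ne hnorm

namespace IsGeneric

variable {q : ℂ}

lemma pow_ne_zero (hq : IsGeneric q) (n : ℕ) : q ^ n ≠ 0 :=
  _root_.pow_ne_zero n hq.ne_zero

lemma pow_ne_pow (hq : IsGeneric q) {m n : ℕ} (hmn : m ≠ n) : q ^ m ≠ q ^ n := by
  wlog hlt : m < n generalizing m n
  · exact (this hmn.symm (by omega)).symm
  intro h
  refine hq.not_isOfFinOrder (isOfFinOrder_iff_pow_eq_one.2 ⟨n - m, by omega, ?_⟩)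
  rw [pow_sub₀ q hq.ne_zero hlt.le, ← h, mul_inv_cancel₀ (hq.pow_ne_zero m)]

lemma one_sub_pow_ne_zero (hq : IsGeneric q) {n : ℕ} (hn : n ≠ 0) : 1 - q ^ n ≠ 0 := by
  simpa using sub_ne_zero.2 (hq.pow_ne_pow hn.symm)

lemma one_add_pow_ne_zero (hq : IsGeneric q) (n : ℕ) : 1 + q ^ n ≠ 0 := by
  rcases Nat.eq_zero_or_pos n with rfl | hn
  · norm_num
  · intro h
    apply hq.one_sub_pow_ne_zero (n := 2 * n) (by omega)
    linear_combination (1 - q ^ n) * h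

lemma one_sub_ne_zero (hq : IsGeneric q) {x : ℂ} {n : ℕ} (hn : n ≠ 0) (hx : q ^ n = x) :
    1 - x ≠ 0 :=
  hx ▸ hq.one_sub_pow_ne_zero hn

lemma one_add_ne_zero (hq : IsGeneric q) {x : ℂ} {n : ℕ} (hx : q ^ n = x) : 1 + x ≠ 0 :=
  hx ▸ hq.one_add_pow_ne_zero n

end IsGeneric

/-- The sequence `0, f 0, f 1, …`, that is, `f (k - 1)` without the truncation of `0 - 1`. -/
def delay (f : ℕ → ℂ) : ℕ → ℂ
  | 0 => 0
  | k + 1 => f k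

lemma qp_zero (a p : ℂ) : qp a p 0 = 1 := by
  simp [qp]

lemma qp_succ (a p : ℂ) (n : ℕ) : qp a p (n + 1) = qp a p n * (1 - a * p ^ n) :=
  Finset.prod_range_succ _ n

lemma qp_succ' (a p : ℂ) (n : ℕ) : qp a p (n + 1) = (1 - a) * qp (a * p) p n := by
  simp only [qp, Finset.prod_range_succ', pow_zero, mul_one, pow_succ']
  rw [mul_comm]
  simp only [mul_assoc]

lemma qp_ne_zero {a p : ℂ} {n : ℕ} (h : ∀ j < n, 1 - a * p ^ j ≠ 0) : qp a p n ≠ 0 :=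
  Finset.prod_ne_zero_iff.2 fun j hj => h j (Finset.mem_range.1 hj)

lemma qp_eq_zero {a p : ℂ} {m n : ℕ} (hmn : m < n) (h : a * p ^ m = 1) : qp a p n = 0 :=
  Finset.prod_eq_zero (Finset.mem_range.2 hmn) (sub_eq_zero.2 h.symm)

lemma IsGeneric.qp_pow_ne_zero {q : ℂ} (hq : IsGeneric q) {a : ℕ} (ha : a ≠ 0) (n : ℕ) :
    qp (q ^ a) (q ^ 2) n ≠ 0 :=
  qp_ne_zero fun j _ => by
    rw [← pow_mul, ← pow_add]
    exact hq.one_sub_pow_ne_zero (by omega)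

lemma IsGeneric.qp_inv_pow_ne_zero {q : ℂ} (hq : IsGeneric q) {m n : ℕ} (hmn : n ≤ m) :
    qp ((q ^ m) ^ 2)⁻¹ (q ^ 2) n ≠ 0 :=
  qp_ne_zero fun j hj h => by
    have hm : (q ^ m) ^ 2 ≠ 0 := _root_.pow_ne_zero 2 (hq.pow_ne_zero m)
    refine hq.pow_ne_pow (m := 2 * j) (n := 2 * m) (by omega) ?_
    rw [sub_eq_zero, eq_comm, inv_mul_eq_one₀ hm] at h
    linear_combination -h

/-! ### The three-term recurrence of the q-Racah polynomials -/

/-- The product `(B⁻¹; p)_s (c p B; p)_s`. With `B = p ^ n`, `c = αβ` and with `B = p ^ x`,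
`c = γδ` it gives the two dual numerators of the `s`-th term of a q-Racah polynomial. -/
def qpPair (p c B : ℂ) (s : ℕ) : ℂ :=
  qp B⁻¹ p s * qp (c * p * B) p s

/-- The denominator `(αp, βδp, γp, p; p)_s` of the `s`-th term of a q-Racah polynomial. -/
def racahDenom (p α β γ δ : ℂ) (s : ℕ) : ℂ :=
  qp (α * p) p s * qp (β * δ * p) p s * qp (γ * p) p s * qp p p s

section qRacah

variable {p : ℂ}

lemma qpPair_succ (p c B : ℂ) (s : ℕ) :
    qpPair p c B (s + 1) = qpPair p c B s * ((1 - p ^ s / B) * (1 - c * B * p ^ (s + 1))) := by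
  simp only [qpPair, qp_succ]
  ring

lemma qpPair_eq_zero (hp : p ≠ 0) (c : ℂ) {n s : ℕ} (hns : n < s) : qpPair p c (p ^ n) s = 0 := by
  rw [qpPair, qp_eq_zero hns (inv_mul_cancel₀ (pow_ne_zero n hp)), zero_mul]

lemma racahDenom_succ (p α β γ δ : ℂ) (s : ℕ) :
    racahDenom p α β γ δ (s + 1) = racahDenom p α β γ δ s * ((1 - α * p ^ (s + 1)) *
      (1 - β * δ * p ^ (s + 1)) * (1 - γ * p ^ (s + 1)) * (1 - p ^ (s + 1))) := by
  simp only [racahDenom, qp_succ]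
  ring

/-- The sum `∑ s ≤ x` of the terms of a q-Racah polynomial, with the degree entering through the
continuous parameter `B`; at `B = p ^ n` it is the q-Racah polynomial of degree `n`. -/
def racahSum (p α β γ δ B : ℂ) (x : ℕ) : ℂ :=
  ∑ s ∈ Finset.range (x + 1), qpPair p (α * β) B s *
    (qpPair p (γ * δ) (p ^ x) s / racahDenom p α β γ δ s * p ^ s)

lemma qRacah_eq_racahSum (hp : p ≠ 0) (α β γ δ : ℂ) (n x : ℕ) :
    qRacah p α β γ δ n x = racahSum p α β γ δ (p ^ n) x := by
  have hterm (s : ℕ) : qp (p ^ (-(n : ℤ))) p s * qp (α * β * p ^ (n + 1)) p s *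
        qp (p ^ (-(x : ℤ))) p s * qp (γ * δ * p ^ (x + 1)) p s /
        (qp (α * p) p s * qp (β * δ * p) p s * qp (γ * p) p s * qp p p s) * p ^ s =
      qpPair p (α * β) (p ^ n) s *
        (qpPair p (γ * δ) (p ^ x) s / racahDenom p α β γ δ s * p ^ s) := by
    simp only [qpPair, racahDenom, _root_.zpow_neg, zpow_natCast, pow_succ', mul_assoc]
    ring
  rw [qRacah, racahSum, Finset.sum_congr rfl fun s _ => hterm s]
  refine Finset.sum_subset (Finset.range_subset_range.2 (by omega)) fun s hs hs' => ?_
  rw [Finset.mem_range] at hs hs'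
  rw [qpPair_eq_zero hp _ (by omega), zero_mul]

lemma qpPair_sub_qpPair_mul (c : ℂ) {B : ℂ} (hp : p ≠ 0) (hB : B ≠ 0) (s : ℕ) :
    (1 - c * p * B) * (qpPair p c (p * B) (s + 1) - qpPair p c B (s + 1)) =
      -((1 - c * p ^ 2 * B ^ 2) / (p * B) * (1 - p ^ (s + 1)) *
        (1 - c * B * p ^ (s + 1)) * qpPair p c B s) := by
  have hshift : (p * B)⁻¹ * p = B⁻¹ := by field_simp
  have hleft : (1 - c * p * B) * qp (c * p * (p * B)) p s =
      qp (c * p * B) p s * (1 - c * p * B * p ^ s) := by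
    rw [← qp_succ, qp_succ', show c * p * (p * B) = c * p * B * p by ring]
  have hup : qpPair p c (p * B) (s + 1) = (1 - (p * B)⁻¹) * qp B⁻¹ p s *
      (qp (c * p * (p * B)) p s * (1 - c * p * (p * B) * p ^ s)) := by
    rw [qpPair, qp_succ', hshift, qp_succ]
  rw [mul_sub, hup, qpPair_succ, qpPair]
  linear_combination (norm := (field_simp; ring))
    (1 - (p * B)⁻¹) * qp B⁻¹ p s * (1 - c * p * (p * B) * p ^ s) * hleft

lemma qpPair_sub_qpPair_div (c : ℂ) {B : ℂ} (hp : p ≠ 0) (hB : B ≠ 0) (s : ℕ) :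
    (1 - B) * (qpPair p c (B / p) (s + 1) - qpPair p c B (s + 1)) =
      -((1 - c * B ^ 2) * (1 - p ^ (s + 1)) * (1 - p ^ s / B) * qpPair p c B s) := by
  have hshift : c * p * (B / p) = c * B := by field_simp
  have hright : (1 - B⁻¹) * qp (B / p)⁻¹ p s = qp B⁻¹ p s * (1 - B⁻¹ * p ^ s) := by
    rw [← qp_succ, qp_succ', inv_div, div_eq_inv_mul]
  have hdown : qpPair p c (B / p) (s + 1) = qp (B / p)⁻¹ p s * (1 - (B / p)⁻¹ * p ^ s) *
      ((1 - c * B) * qp (c * p * B) p s) := by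
    rw [qpPair, qp_succ, hshift, qp_succ', mul_right_comm c B p]
  rw [mul_sub, hdown, qpPair_succ, qpPair]
  linear_combination (norm := (field_simp; ring))
    -(B * (1 - (B / p)⁻¹ * p ^ s) * (1 - c * B) * qp (c * p * B) p s) * hright

/-- The coefficient of the shift `n → n + 1` in the recurrence of the q-Racah polynomials,
in terms of `B = p ^ n`. -/
def racahUp (p α β γ δ B : ℂ) : ℂ :=
  (1 - α * p * B) * (1 - α * β * p * B) * (1 - β * δ * p * B) * (1 - γ * p * B) /
    ((1 - α * β * p * B ^ 2) * (1 - α * β * p ^ 2 * B ^ 2))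

/-- The coefficient of the shift `n → n - 1` in the recurrence of the q-Racah polynomials,
in terms of `B = p ^ n`. -/
def racahDown (p α β γ δ B : ℂ) : ℂ :=
  p * (1 - B) * (1 - β * B) * (γ - α * β * B) * (δ - α * B) /
    ((1 - α * β * B ^ 2) * (1 - α * β * p * B ^ 2))

lemma racahUp_mul_qpPair_sub {α β γ δ B : ℂ} (hp : p ≠ 0) (hB : B ≠ 0)
    (h1 : 1 - α * β * p * B ^ 2 ≠ 0) (h2 : 1 - α * β * p ^ 2 * B ^ 2 ≠ 0) (s : ℕ) :
    racahUp p α β γ δ B * (qpPair p (α * β) (p * B) (s + 1) - qpPair p (α * β) B (s + 1)) =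
      -((1 - α * p * B) * (1 - β * δ * p * B) * (1 - γ * p * B) /
        (p * B * (1 - α * β * p * B ^ 2)) * (1 - p ^ (s + 1)) *
        (1 - α * β * B * p ^ (s + 1)) * qpPair p (α * β) B s) := by
  have hup := qpPair_sub_qpPair_mul (α * β) hp hB s
  rw [racahUp]
  generalize 1 - α * β * p * B ^ 2 = d₁, 1 - α * β * p ^ 2 * B ^ 2 = d₂ at *
  linear_combination (norm := (field_simp; ring))
    (1 - α * p * B) * (1 - β * δ * p * B) * (1 - γ * p * B) /
      (d₁ * d₂) * hup

lemma racahDown_mul_qpPair_sub {α β γ δ B : ℂ} (hp : p ≠ 0) (hB : B ≠ 0)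
    (h0 : B ≠ 1 → 1 - α * β * B ^ 2 ≠ 0) (h1 : 1 - α * β * p * B ^ 2 ≠ 0) (s : ℕ) :
    racahDown p α β γ δ B * (qpPair p (α * β) (B / p) (s + 1) - qpPair p (α * β) B (s + 1)) =
      -(p * (1 - β * B) * (γ - α * β * B) * (δ - α * B) / (1 - α * β * p * B ^ 2) *
        (1 - p ^ (s + 1)) * (1 - p ^ s / B) * qpPair p (α * β) B s) := by
  rcases eq_or_ne B 1 with rfl | hB1
  · have hzero : (1 - p ^ s / 1) * qpPair p (α * β) 1 s = 0 := by
      rcases s with _ | s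
      · simp
      · rw [qpPair, qp_eq_zero s.succ_pos (by simp), zero_mul, mul_zero]
    rw [mul_assoc _ (1 - p ^ s / 1), hzero, racahDown]
    simp
  · have hdown := qpPair_sub_qpPair_div (α * β) hp hB s
    have h0' := h0 hB1
    rw [racahDown]
    generalize 1 - α * β * B ^ 2 = d₀, 1 - α * β * p * B ^ 2 = d₁ at *
    linear_combination (norm := (field_simp; ring))
      p * (1 - β * B) * (γ - α * β * B) * (δ - α * B) /
        (d₀ * d₁) * hdown

lemma racahUp_mul_sub_add_racahDown_mul_sub {α β γ δ B : ℂ} (hp : p ≠ 0) (hB : B ≠ 0)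
    (h0 : B ≠ 1 → 1 - α * β * B ^ 2 ≠ 0) (h1 : 1 - α * β * p * B ^ 2 ≠ 0)
    (h2 : 1 - α * β * p ^ 2 * B ^ 2 ≠ 0) (s : ℕ) :
    (racahUp p α β γ δ B * (qpPair p (α * β) (p * B) (s + 1) - qpPair p (α * β) B (s + 1)) +
        racahDown p α β γ δ B *
          (qpPair p (α * β) (B / p) (s + 1) - qpPair p (α * β) B (s + 1))) * p ^ (s + 1) =
      (1 - p ^ (s + 1)) * ((1 - γ * δ * p * p ^ (s + 1)) * qpPair p (α * β) B (s + 1) -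
        (1 - α * p ^ (s + 1)) * (1 - β * δ * p ^ (s + 1)) * (1 - γ * p ^ (s + 1)) *
          qpPair p (α * β) B s) := by
  rw [racahUp_mul_qpPair_sub hp hB h1 h2, racahDown_mul_qpPair_sub hp hB h0 h1, qpPair_succ]
  generalize hd : 1 - α * β * p * B ^ 2 = d at *
  field_simp
  rw [← hd]
  ring

/-- The summand of the telescoping sum behind the recurrence of the q-Racah polynomials. -/
def racahTelescoper (p α β γ δ B : ℂ) (x : ℕ) : ℕ → ℂ :=
  delay fun r => qpPair p (γ * δ) (p ^ x) (r + 1) * qpPair p (α * β) B r / racahDenom p α β γ δ r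

lemma racahSum_term_recurrence {α β γ δ B : ℂ} {x : ℕ} (hp : p ≠ 0) (hB : B ≠ 0)
    (h0 : B ≠ 1 → 1 - α * β * B ^ 2 ≠ 0) (h1 : 1 - α * β * p * B ^ 2 ≠ 0)
    (h2 : 1 - α * β * p ^ 2 * B ^ 2 ≠ 0) {s : ℕ} (hs : racahDenom p α β γ δ s ≠ 0) :
    (racahUp p α β γ δ B * (qpPair p (α * β) (p * B) s - qpPair p (α * β) B s) +
        racahDown p α β γ δ B * (qpPair p (α * β) (B / p) s - qpPair p (α * β) B s)) *
          (qpPair p (γ * δ) (p ^ x) s / racahDenom p α β γ δ s * p ^ s) =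
      -((1 - (p ^ x)⁻¹) * (1 - γ * δ * p * p ^ x)) *
          (qpPair p (α * β) B s * (qpPair p (γ * δ) (p ^ x) s / racahDenom p α β γ δ s * p ^ s)) +
        (racahTelescoper p α β γ δ B x (s + 1) - racahTelescoper p α β γ δ B x s) := by
  have hx : p ^ x ≠ 0 := pow_ne_zero x hp
  rcases s with _ | s
  · simp [racahTelescoper, delay, qpPair, racahDenom, qp_zero, qp_succ]
  · have hstep := racahUp_mul_sub_add_racahDown_mul_sub hp hB h0 h1 h2 (γ := γ) (δ := δ) s
    rw [racahDenom_succ] at hs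
    obtain ⟨hDs, hfactor⟩ := mul_ne_zero_iff.1 hs
    simp only [racahTelescoper, delay]
    rw [racahDenom_succ, qpPair_succ p (γ * δ) _ (s + 1)]
    generalize hF : (1 - α * p ^ (s + 1)) * (1 - β * δ * p ^ (s + 1)) * (1 - γ * p ^ (s + 1)) *
      (1 - p ^ (s + 1)) = F at *
    generalize qpPair p (γ * δ) (p ^ x) (s + 1) = φ, racahDenom p α β γ δ s = D,
      qpPair p (α * β) B (s + 1) = a at *
    linear_combination (norm := skip) φ / (D * F) * hstep
    field_simp
    rw [← hF]
    ring

lemma racahSum_recurrence {α β γ δ B : ℂ} {x : ℕ} (hp : p ≠ 0) (hB : B ≠ 0)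
    (h0 : B ≠ 1 → 1 - α * β * B ^ 2 ≠ 0) (h1 : 1 - α * β * p * B ^ 2 ≠ 0)
    (h2 : 1 - α * β * p ^ 2 * B ^ 2 ≠ 0) (hD : ∀ s ≤ x, racahDenom p α β γ δ s ≠ 0) :
    racahUp p α β γ δ B * (racahSum p α β γ δ (p * B) x - racahSum p α β γ δ B x) +
        racahDown p α β γ δ B * (racahSum p α β γ δ (B / p) x - racahSum p α β γ δ B x) =
      -((1 - (p ^ x)⁻¹) * (1 - γ * δ * p * p ^ x)) * racahSum p α β γ δ B x := by
  have hlast : racahTelescoper p α β γ δ B x (x + 1) = 0 := by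
    simp only [racahTelescoper, delay]
    rw [qpPair_eq_zero hp _ x.lt_succ_self, zero_mul, zero_div]
  calc
    _ = ∑ s ∈ Finset.range (x + 1),
        (racahUp p α β γ δ B * (qpPair p (α * β) (p * B) s - qpPair p (α * β) B s) +
          racahDown p α β γ δ B * (qpPair p (α * β) (B / p) s - qpPair p (α * β) B s)) *
            (qpPair p (γ * δ) (p ^ x) s / racahDenom p α β γ δ s * p ^ s) := by
      simp only [racahSum, ← Finset.sum_sub_distrib, Finset.mul_sum, ← Finset.sum_add_distrib]
      exact Finset.sum_congr rfl fun _ _ => by ring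
    _ = _ := Finset.sum_congr rfl fun s hs =>
      racahSum_term_recurrence hp hB h0 h1 h2 (hD s (Nat.lt_succ_iff.1 (Finset.mem_range.1 hs)))
    _ = _ := by
      rw [Finset.sum_add_distrib, ← Finset.mul_sum, Finset.sum_range_sub, hlast]
      simp [racahTelescoper, delay, racahSum]

end qRacah

/-- The q-Racah factor `R_k(μ(j); 1, 1, q^{-2m-2}, q^{-2L-2}; q²)` of the entries of `P_n` in the
column `j`, where `m = n + j`, as a sequence in its degree `k`. -/
def racahSeq (q : ℂ) (L m j k : ℕ) : ℂ :=
  qRacah (q ^ 2) 1 1 (q ^ (-(2 * (m : ℤ) + 2))) (q ^ (-(2 * (L : ℤ) + 2))) k j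

section racahSeq

variable {q : ℂ}

lemma IsGeneric.racahDenom_ne_zero (hq : IsGeneric q) {L m s : ℕ} (hsL : s ≤ L) (hsm : s ≤ m) :
    racahDenom (q ^ 2) 1 1 (q ^ 2 * (q ^ m) ^ 2)⁻¹ (q ^ 2 * (q ^ L) ^ 2)⁻¹ s ≠ 0 := by
  have hcancel (a : ℕ) : (q ^ 2 * (q ^ a) ^ 2)⁻¹ * q ^ 2 = ((q ^ a) ^ 2)⁻¹ := by
    rw [_root_.mul_inv_rev, inv_mul_cancel_right₀ (hq.pow_ne_zero 2)]
  simp only [racahDenom, one_mul, hcancel]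
  have hp : qp (q ^ 2) (q ^ 2) s ≠ 0 := hq.qp_pow_ne_zero two_ne_zero s
  exact mul_ne_zero (mul_ne_zero (mul_ne_zero hp (hq.qp_inv_pow_ne_zero hsL))
    (hq.qp_inv_pow_ne_zero hsm)) hp

lemma mul_racahUp_one_one {p V T B : ℂ} (hp : p ≠ 0) (hV : V ≠ 0) (hT : T ≠ 0)
    (hB : 1 - p * B ≠ 0) :
    p * T * V * racahUp p 1 1 (p * V)⁻¹ (p * T)⁻¹ B =
      p * (1 - p * B) * (B - V) * (B - T) / ((1 - p * B ^ 2) * (1 + p * B)) := by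
  have hsplit : 1 - 1 * 1 * p ^ 2 * B ^ 2 = (1 - p * B) * (1 + p * B) := by ring
  rw [racahUp, hsplit]
  field_simp
  ring

lemma mul_racahDown_one_one {p V T B : ℂ} (hp : p ≠ 0) (hV : V ≠ 0) (hT : T ≠ 0) :
    p * T * V * racahDown p 1 1 (p * V)⁻¹ (p * T)⁻¹ B =
      (1 - B) * (1 - p * T * B) * (1 - p * V * B) / ((1 + B) * (1 - p * B ^ 2)) := by
  rcases eq_or_ne B 1 with rfl | hB
  · simp [racahDown]
  · have hB' : 1 - B ≠ 0 := sub_ne_zero.2 hB.symm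
    have hsplit : 1 - 1 * 1 * B ^ 2 = (1 - B) * (1 + B) := by ring
    rw [racahDown, hsplit]
    field_simp

lemma racahSeq_eq_racahSum (hq : IsGeneric q) (L m j k : ℕ) :
    racahSeq q L m j k =
      racahSum (q ^ 2) 1 1 (q ^ 2 * (q ^ m) ^ 2)⁻¹ (q ^ 2 * (q ^ L) ^ 2)⁻¹ ((q ^ k) ^ 2) j := by
  have hpow (a : ℕ) : q ^ (-(2 * (a : ℤ) + 2)) = (q ^ 2 * (q ^ a) ^ 2)⁻¹ := by
    rw [_root_.zpow_neg, ← pow_mul, ← pow_add, ← zpow_natCast]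
    push_cast
    ring_nf
  rw [racahSeq, qRacah_eq_racahSum (hq.pow_ne_zero 2), hpow, hpow, pow_right_comm q 2 k]

lemma racahSum_one_one_recurrence {p V T B : ℂ} {x : ℕ} (hp : p ≠ 0) (hV : V ≠ 0) (hT : T ≠ 0)
    (hB : B ≠ 0) (hB' : 1 + B ≠ 0) (hpB : 1 - p * B ≠ 0) (hpB' : 1 + p * B ≠ 0)
    (hpB2 : 1 - p * B ^ 2 ≠ 0) (hD : ∀ s ≤ x, racahDenom p 1 1 (p * V)⁻¹ (p * T)⁻¹ s ≠ 0) :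
    p * (1 - p * B) * (B - V) * (B - T) / ((1 - p * B ^ 2) * (1 + p * B)) *
          racahSum p 1 1 (p * V)⁻¹ (p * T)⁻¹ (p * B) x +
        2 * B * (1 + p * T) * (1 + p * V) / ((1 + B) * (1 + p * B)) *
          racahSum p 1 1 (p * V)⁻¹ (p * T)⁻¹ B x +
        (1 - B) * (1 - p * T * B) * (1 - p * V * B) / ((1 + B) * (1 - p * B ^ 2)) *
          racahSum p 1 1 (p * V)⁻¹ (p * T)⁻¹ (B / p) x =
      (p ^ x + p * T * V / p ^ x) * racahSum p 1 1 (p * V)⁻¹ (p * T)⁻¹ B x := by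
  have hx : p ^ x ≠ 0 := pow_ne_zero x hp
  have hrec := racahSum_recurrence (α := 1) (β := 1) (x := x) hp hB
    (fun h => by
      rw [show 1 - 1 * 1 * B ^ 2 = (1 - B) * (1 + B) by ring]
      exact mul_ne_zero (sub_ne_zero.2 h.symm) hB')
    (by simpa using hpB2)
    (by
      rw [show 1 - 1 * 1 * p ^ 2 * B ^ 2 = (1 - p * B) * (1 + p * B) by ring]
      exact mul_ne_zero hpB hpB') hD
  have hup := mul_racahUp_one_one hp hV hT hpB
  have hdown := mul_racahDown_one_one (B := B) hp hV hT
  have hdiag : 2 * B * (1 + p * T) * (1 + p * V) / ((1 + B) * (1 + p * B)) =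
      1 + p * T * V - p * (1 - p * B) * (B - V) * (B - T) / ((1 - p * B ^ 2) * (1 + p * B)) -
        (1 - B) * (1 - p * T * B) * (1 - p * V * B) / ((1 + B) * (1 - p * B ^ 2)) := by
    generalize hd : 1 + p * B = d, he : 1 - p * B ^ 2 = e at hpB' hpB2 ⊢
    field_simp
    rw [← hd, ← he]
    ring
  have heigen : p * T * V * -((1 - (p ^ x)⁻¹) * (1 - (p * V)⁻¹ * (p * T)⁻¹ * p * p ^ x)) =
      p ^ x + p * T * V / p ^ x - (1 + p * T * V) := by
    field_simp
    ring
  rw [hdiag, ← hup, ← hdown]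
  linear_combination p * T * V * hrec + racahSum p 1 1 (p * V)⁻¹ (p * T)⁻¹ B x * heigen

lemma racahSeq_recurrence (hq : IsGeneric q) {L m j : ℕ} (hjL : j ≤ L) (hjm : j ≤ m) (k : ℕ) :
    q ^ 2 * (1 - q ^ 2 * (q ^ k) ^ 2) * ((q ^ k) ^ 2 - (q ^ m) ^ 2) * ((q ^ k) ^ 2 - (q ^ L) ^ 2) /
          ((1 - q ^ 2 * (q ^ k) ^ 4) * (1 + q ^ 2 * (q ^ k) ^ 2)) * racahSeq q L m j (k + 1) +
        2 * (q ^ k) ^ 2 * (1 + q ^ 2 * (q ^ L) ^ 2) * (1 + q ^ 2 * (q ^ m) ^ 2) /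
          ((1 + (q ^ k) ^ 2) * (1 + q ^ 2 * (q ^ k) ^ 2)) * racahSeq q L m j k +
        (1 - (q ^ k) ^ 2) * (1 - q ^ 2 * (q ^ L) ^ 2 * (q ^ k) ^ 2) *
          (1 - q ^ 2 * (q ^ m) ^ 2 * (q ^ k) ^ 2) /
          ((1 + (q ^ k) ^ 2) * (1 - q ^ 2 * (q ^ k) ^ 4)) * delay (racahSeq q L m j) k =
      ((q ^ j) ^ 2 + q ^ 2 * (q ^ L) ^ 2 * (q ^ m) ^ 2 / (q ^ j) ^ 2) * racahSeq q L m j k := by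
  have hsq (a : ℕ) : (q ^ a) ^ 2 ≠ 0 := _root_.pow_ne_zero 2 (hq.pow_ne_zero a)
  have hrec := racahSum_one_one_recurrence (x := j) (hq.pow_ne_zero 2) (hsq m) (hsq L) (hsq k)
    (hq.one_add_ne_zero (n := 2 * k) (by ring))
    (hq.one_sub_ne_zero (n := 2 * k + 2) (by omega) (by ring))
    (hq.one_add_ne_zero (n := 2 * k + 2) (by ring))
    (hq.one_sub_ne_zero (n := 4 * k + 2) (by omega) (by ring))
    fun s hs => hq.racahDenom_ne_zero (hs.trans hjL) (hs.trans hjm)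
  have hup : q ^ 2 * (q ^ k) ^ 2 = (q ^ (k + 1)) ^ 2 := by ring
  have hfour : ((q ^ k) ^ 2) ^ 2 = (q ^ k) ^ 4 := by ring
  have hdelay : (1 - (q ^ k) ^ 2) * delay (racahSeq q L m j) k =
      (1 - (q ^ k) ^ 2) * racahSum (q ^ 2) 1 1 (q ^ 2 * (q ^ m) ^ 2)⁻¹
        (q ^ 2 * (q ^ L) ^ 2)⁻¹ ((q ^ k) ^ 2 / q ^ 2) j := by
    rcases k with _ | k
    · simp
    · rw [delay, racahSeq_eq_racahSum hq, pow_succ q k, mul_pow,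
        mul_div_cancel_right₀ _ (hq.pow_ne_zero 2)]
  rw [hfour, pow_right_comm q 2 j] at hrec
  rw [racahSeq_eq_racahSum hq, racahSeq_eq_racahSum hq, ← hup]
  linear_combination hrec +
    (1 - q ^ 2 * (q ^ L) ^ 2 * (q ^ k) ^ 2) * (1 - q ^ 2 * (q ^ m) ^ 2 * (q ^ k) ^ 2) /
      ((1 + (q ^ k) ^ 2) * (1 - q ^ 2 * (q ^ k) ^ 4)) * hdelay

end racahSeq

/-! ### Contiguous relations of the continuous q-ultraspherical polynomials -/

lemma Chat_inv (p β : ℂ) (N : ℕ) (z : ℂ) : Chat p β N z⁻¹ = Chat p β N z := by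
  rw [Chat, Chat, ← Finset.sum_range_reflect]
  refine Finset.sum_congr rfl fun r hr => ?_
  have hrN : r ≤ N := Nat.lt_succ_iff.1 (Finset.mem_range.1 hr)
  rw [Nat.add_sub_cancel, Nat.sub_sub_self hrN, _root_.inv_zpow', Nat.cast_sub hrN,
    mul_comm (qp β p (N - r)), mul_comm (qp p p (N - r))]
  congr 2
  ring

lemma Chat_zero (p β z : ℂ) : Chat p β 0 z = 1 := by
  simp [Chat, qp]

/-- The coefficient `(β; q²)_r / (q²; q²)_r` in the generating function of the continuous
q-ultraspherical polynomials. -/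
def ultraCoeff (q β : ℂ) (r : ℕ) : ℂ :=
  qp β (q ^ 2) r / qp (q ^ 2) (q ^ 2) r

/-- The symmetric Laurent sum of `Chat (q ^ 2) β N z` with the `r`-th term multiplied by the
weight `w r`. Shifts of `z` by powers of `q` amount to geometric weights. -/
def ultraSum (q β : ℂ) (N : ℕ) (z : ℂ) (w : ℕ → ℂ) : ℂ :=
  ∑ r ∈ Finset.range (N + 1),
    w r * (ultraCoeff q β r * ultraCoeff q β (N - r) * z ^ ((N : ℤ) - 2 * (r : ℤ)))

section Ultraspherical

variable {q : ℂ}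

lemma one_sub_mul_ultraCoeff_succ (hq : IsGeneric q) (β : ℂ) (r : ℕ) :
    (1 - (q ^ 2) ^ (r + 1)) * ultraCoeff q β (r + 1) =
      (1 - β * (q ^ 2) ^ r) * ultraCoeff q β r := by
  have hfactor : 1 - q ^ 2 * (q ^ 2) ^ r ≠ 0 :=
    hq.one_sub_ne_zero (n := 2 * r + 2) (by omega) (by ring)
  have hqp := hq.qp_pow_ne_zero two_ne_zero r
  rw [ultraCoeff, ultraCoeff, qp_succ, qp_succ, pow_succ']
  field_simp

lemma one_sub_mul_ultraCoeff_mul (q β : ℂ) (r : ℕ) :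
    (1 - β) * ultraCoeff q (β * q ^ 2) r = (1 - β * (q ^ 2) ^ r) * ultraCoeff q β r := by
  rw [ultraCoeff, ultraCoeff, ← mul_div_assoc, ← mul_div_assoc, ← qp_succ', qp_succ, mul_comm]

lemma ultraSum_add (q β : ℂ) (N : ℕ) (z : ℂ) (w v : ℕ → ℂ) :
    ultraSum q β N z (fun r => w r + v r) = ultraSum q β N z w + ultraSum q β N z v := by
  simp only [ultraSum, add_mul, Finset.sum_add_distrib]

lemma ultraSum_const_mul (q β : ℂ) (N : ℕ) (z c : ℂ) (w : ℕ → ℂ) :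
    ultraSum q β N z (fun r => c * w r) = c * ultraSum q β N z w := by
  simp only [ultraSum, Finset.mul_sum, mul_assoc]

lemma ultraSum_congr (q β : ℂ) (N : ℕ) (z : ℂ) {w v : ℕ → ℂ} (h : ∀ r ≤ N, w r = v r) :
    ultraSum q β N z w = ultraSum q β N z v :=
  Finset.sum_congr rfl fun r hr => by rw [h r (Nat.lt_succ_iff.1 (Finset.mem_range.1 hr))]

lemma ultraSum_one (q β : ℂ) (N : ℕ) (z : ℂ) :
    ultraSum q β N z (fun _ => 1) = Chat (q ^ 2) β N z :=
  Finset.sum_congr rfl fun r _ => by rw [one_mul, ultraCoeff, ultraCoeff, div_mul_div_comm]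

lemma ultraSum_pow (hq : q ≠ 0) (β : ℂ) (N : ℕ) (z : ℂ) :
    ultraSum q β N z (fun r => (q ^ 2) ^ r) = q ^ N * Chat (q ^ 2) β N (q⁻¹ * z) := by
  rw [← ultraSum_one, ← ultraSum_const_mul]
  refine Finset.sum_congr rfl fun r _ => ?_
  have hpow : q ^ N * q⁻¹ ^ ((N : ℤ) - 2 * (r : ℤ)) = (q ^ 2) ^ r := by
    rw [_root_.inv_zpow', ← zpow_natCast, ← zpow_add₀ hq, ← pow_mul, ← zpow_natCast]
    congr 1
    push_cast
    ring
  rw [mul_zpow]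
  linear_combination
    -(ultraCoeff q β r * ultraCoeff q β (N - r) * z ^ ((N : ℤ) - 2 * (r : ℤ))) * hpow

lemma ultraSum_pow_sub (hq : q ≠ 0) (β : ℂ) (N : ℕ) (z : ℂ) :
    ultraSum q β N z (fun r => (q ^ 2) ^ (N - r)) = q ^ N * Chat (q ^ 2) β N (q * z) := by
  rw [← ultraSum_one, ← ultraSum_const_mul]
  refine Finset.sum_congr rfl fun r hr => ?_
  have hrN : r ≤ N := Nat.lt_succ_iff.1 (Finset.mem_range.1 hr)
  have hpow : q ^ N * q ^ ((N : ℤ) - 2 * (r : ℤ)) = (q ^ 2) ^ (N - r) := by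
    rw [← zpow_natCast, ← zpow_add₀ hq, ← pow_mul, ← zpow_natCast]
    congr 1
    push_cast [Nat.cast_sub hrN]
    ring
  rw [mul_zpow]
  linear_combination
    -(ultraCoeff q β r * ultraCoeff q β (N - r) * z ^ ((N : ℤ) - 2 * (r : ℤ))) * hpow

lemma ultraSum_succ (hq : IsGeneric q) (β : ℂ) (N : ℕ) {z : ℂ} (hz : z ≠ 0) (w : ℕ → ℂ) :
    ultraSum q β (N + 1) z (fun r => (1 - (q ^ 2) ^ r) * w (N + 1 - r)) =
      z⁻¹ * ultraSum q β N z (fun r => (1 - β * (q ^ 2) ^ r) * w (N - r)) := by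
  rw [ultraSum, ultraSum, Finset.sum_range_succ', Finset.mul_sum]
  simp only [pow_zero, sub_self, zero_mul, add_zero]
  refine Finset.sum_congr rfl fun r _ => ?_
  have hz_pow : z ^ (((N + 1 : ℕ) : ℤ) - 2 * ((r + 1 : ℕ) : ℤ)) =
      z⁻¹ * z ^ ((N : ℤ) - 2 * (r : ℤ)) := by
    rw [← _root_.zpow_neg_one, ← zpow_add₀ hz]
    congr 1
    push_cast
    ring
  rw [Nat.add_sub_add_right, hz_pow]
  linear_combination w (N - r) * ultraCoeff q β (N - r) * z⁻¹ * z ^ ((N : ℤ) - 2 * (r : ℤ)) *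
    one_sub_mul_ultraCoeff_succ hq β r

lemma Chat_sub_Chat_inv_mul (hq : IsGeneric q) (β : ℂ) (N : ℕ) {z : ℂ} (hz : z ≠ 0) :
    Chat (q ^ 2) β (N + 1) z - q ^ (N + 1) * Chat (q ^ 2) β (N + 1) (q⁻¹ * z) =
      z⁻¹ * (Chat (q ^ 2) β N z - β * (q ^ N * Chat (q ^ 2) β N (q⁻¹ * z))) := by
  have hstep := ultraSum_succ hq β N hz fun _ => 1
  have hleft : ultraSum q β (N + 1) z (fun r => (1 - (q ^ 2) ^ r) * 1) =
      ultraSum q β (N + 1) z fun r => 1 + -1 * (q ^ 2) ^ r :=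
    ultraSum_congr _ _ _ _ fun r _ => by ring
  have hright : ultraSum q β N z (fun r => (1 - β * (q ^ 2) ^ r) * 1) =
      ultraSum q β N z fun r => 1 + -β * (q ^ 2) ^ r :=
    ultraSum_congr _ _ _ _ fun r _ => by ring
  rw [hleft, hright, ultraSum_add, ultraSum_add, ultraSum_const_mul, ultraSum_const_mul,
    ultraSum_one, ultraSum_one, ultraSum_pow hq.ne_zero, ultraSum_pow hq.ne_zero] at hstep
  linear_combination hstep

lemma sq_one_sub_mul_Chat_mul (q β : ℂ) (N : ℕ) (z : ℂ) :
    (1 - β) ^ 2 * Chat (q ^ 2) (β * q ^ 2) N z =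
      ultraSum q β N z fun r => (1 - β * (q ^ 2) ^ r) * (1 - β * (q ^ 2) ^ (N - r)) := by
  rw [← ultraSum_one, ← ultraSum_const_mul]
  refine Finset.sum_congr rfl fun r _ => ?_
  linear_combination
    (1 - β) * ultraCoeff q (β * q ^ 2) (N - r) * z ^ ((N : ℤ) - 2 * (r : ℤ)) *
      one_sub_mul_ultraCoeff_mul q β r +
    (1 - β * (q ^ 2) ^ r) * ultraCoeff q β r * z ^ ((N : ℤ) - 2 * (r : ℤ)) *
      one_sub_mul_ultraCoeff_mul q β (N - r)

lemma Chat_contiguous_inv (hq : IsGeneric q) (β : ℂ) (N : ℕ) {z : ℂ} (hz : z ≠ 0) :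
    (1 + β * (q ^ 2) ^ (N + 1)) * Chat (q ^ 2) β (N + 1) z -
        q ^ (N + 1) * Chat (q ^ 2) β (N + 1) (q⁻¹ * z) -
        β * (q ^ (N + 1) * Chat (q ^ 2) β (N + 1) (q * z)) =
      z⁻¹ * ((1 - β) ^ 2 * Chat (q ^ 2) (β * q ^ 2) N z) := by
  have hstep := ultraSum_succ hq β N hz fun s => 1 - β * (q ^ 2) ^ s
  have hleft : ultraSum q β (N + 1) z
        (fun r => (1 - (q ^ 2) ^ r) * (1 - β * (q ^ 2) ^ (N + 1 - r))) =
      ultraSum q β (N + 1) z fun r => (1 + β * (q ^ 2) ^ (N + 1)) * 1 +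
        (-1 * (q ^ 2) ^ r + -β * (q ^ 2) ^ (N + 1 - r)) :=
    ultraSum_congr _ _ _ _ fun r hr => by
      have hpow : (q ^ 2) ^ (N + 1) = (q ^ 2) ^ r * (q ^ 2) ^ (N + 1 - r) := by
        rw [← pow_add, Nat.add_sub_cancel' hr]
      rw [hpow]
      ring
  rw [hleft, ultraSum_add, ultraSum_add, ultraSum_const_mul, ultraSum_const_mul,
    ultraSum_const_mul, ultraSum_one, ultraSum_pow hq.ne_zero, ultraSum_pow_sub hq.ne_zero,
    ← sq_one_sub_mul_Chat_mul] at hstep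
  linear_combination hstep

lemma Chat_mul_inv (p q β : ℂ) (N : ℕ) (z : ℂ) : Chat p β N (q * z⁻¹) = Chat p β N (q⁻¹ * z) := by
  rw [← Chat_inv, mul_inv, inv_inv]

lemma Chat_inv_mul_inv (p q β : ℂ) (N : ℕ) (z : ℂ) :
    Chat p β N (q⁻¹ * z⁻¹) = Chat p β N (q * z) := by
  rw [Chat_mul_inv, inv_inv]

lemma Chat_sub_Chat_mul (hq : IsGeneric q) (β : ℂ) (N : ℕ) {z : ℂ} (hz : z ≠ 0) :
    Chat (q ^ 2) β (N + 1) z - q ^ (N + 1) * Chat (q ^ 2) β (N + 1) (q * z) =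
      z * (Chat (q ^ 2) β N z - β * (q ^ N * Chat (q ^ 2) β N (q * z))) := by
  simpa only [Chat_inv_mul_inv, Chat_inv, inv_inv] using
    Chat_sub_Chat_inv_mul hq β N (inv_ne_zero hz)

lemma Chat_contiguous (hq : IsGeneric q) (β : ℂ) (N : ℕ) {z : ℂ} (hz : z ≠ 0) :
    (1 + β * (q ^ 2) ^ (N + 1)) * Chat (q ^ 2) β (N + 1) z -
        q ^ (N + 1) * Chat (q ^ 2) β (N + 1) (q * z) -
        β * (q ^ (N + 1) * Chat (q ^ 2) β (N + 1) (q⁻¹ * z)) =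
      z * ((1 - β) ^ 2 * Chat (q ^ 2) (β * q ^ 2) N z) := by
  simpa only [Chat_inv_mul_inv, Chat_mul_inv, Chat_inv, inv_inv] using
    Chat_contiguous_inv hq β N (inv_ne_zero hz)

lemma Chat_askeyWilson (hq : IsGeneric q) (β : ℂ) (N : ℕ) {z : ℂ} (hz : z ≠ 0) :
    q ^ N * ((1 - β * z ^ 2) * Chat (q ^ 2) β N (q * z) +
        (β - z ^ 2) * Chat (q ^ 2) β N (q⁻¹ * z)) =
      (1 + β * (q ^ 2) ^ N) * (1 - z ^ 2) * Chat (q ^ 2) β N z := by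
  rcases N with _ | N
  · simp only [Chat_zero]
    ring
  · linear_combination (norm := (field_simp; ring))
      z * z * Chat_contiguous_inv hq β N hz - Chat_contiguous hq β N hz

lemma Chat_mul_sub_Chat_inv_mul (hq : IsGeneric q) {β : ℂ} (hβ : 1 - β ≠ 0) (N : ℕ) {z : ℂ}
    (hz : z ≠ 0) :
    q ^ (N + 1) * (Chat (q ^ 2) β (N + 1) (q * z) - Chat (q ^ 2) β (N + 1) (q⁻¹ * z)) =
      (1 - β) * (z⁻¹ - z) * Chat (q ^ 2) (β * q ^ 2) N z := by
  apply mul_left_cancel₀ hβ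
  linear_combination Chat_contiguous_inv hq β N hz - Chat_contiguous hq β N hz

lemma Chat_mul_sq_of_mul (hq : IsGeneric q) {β : ℂ} (hβ : 1 - β ≠ 0) (N : ℕ) {z : ℂ}
    (hz : z ≠ 0) :
    (1 - β) * (β - z ^ 2) * Chat (q ^ 2) (β * q ^ 2) N z =
      z * ((1 + β) * (q ^ (N + 1) * Chat (q ^ 2) β (N + 1) (q * z)) -
        (1 + β * (q ^ 2) ^ (N + 1)) * Chat (q ^ 2) β (N + 1) z) := by
  apply mul_left_cancel₀ hβ
  linear_combination (norm := (field_simp; ring))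
    z * Chat_contiguous hq β N hz - z * β * Chat_contiguous_inv hq β N hz

lemma Chat_mul_sq_of_inv_mul (hq : IsGeneric q) {β : ℂ} (hβ : 1 - β ≠ 0) (N : ℕ) {z : ℂ}
    (hz : z ≠ 0) :
    (1 - β) * (1 - β * z ^ 2) * Chat (q ^ 2) (β * q ^ 2) N z =
      z * ((1 + β * (q ^ 2) ^ (N + 1)) * Chat (q ^ 2) β (N + 1) z -
        (1 + β) * (q ^ (N + 1) * Chat (q ^ 2) β (N + 1) (q⁻¹ * z))) := by
  apply mul_left_cancel₀ hβ
  linear_combination (norm := (field_simp; ring))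
    z * β * Chat_contiguous hq β N hz - z * Chat_contiguous_inv hq β N hz

lemma Chat_mul_sq_raising (hq : IsGeneric q) {β : ℂ} (hβ : 1 - β ≠ 0) (N : ℕ) {z : ℂ}
    (hz : z ≠ 0) :
    (1 - β) * q ^ N *
        ((1 - β * z ^ 2) * (1 - q ^ 2 * β * z ^ 2) * Chat (q ^ 2) (β * q ^ 2) N (q * z) -
          (β - z ^ 2) * (q ^ 2 * β - z ^ 2) * Chat (q ^ 2) (β * q ^ 2) N (q⁻¹ * z)) =
      (1 - (q ^ 2) ^ (N + 1)) * (1 - β ^ 2 * (q ^ 2) ^ (N + 1)) * z * (1 - z ^ 2) *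
        Chat (q ^ 2) β (N + 1) z := by
  have hq0 := hq.ne_zero
  have hup := Chat_mul_sq_of_inv_mul hq hβ N (mul_ne_zero hq0 hz)
  have hdown := Chat_mul_sq_of_mul hq hβ N (mul_ne_zero (inv_ne_zero hq0) hz)
  have haw := Chat_askeyWilson hq β (N + 1) hz
  rw [inv_mul_cancel_left₀ hq0] at hup
  rw [mul_inv_cancel_left₀ hq0] at hdown
  linear_combination (norm := (field_simp; ring))
    q ^ N * (1 - β * z ^ 2) * hup - q ^ N * q ^ 2 * (β - z ^ 2) * hdown +
      z * (1 + β * (q ^ 2) ^ (N + 1)) * haw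

end Ultraspherical

/-! ### The unipotent factor of `P_n` and its intertwining relations -/

/-- The scalar coefficient of the entry `(i, k)` of the unipotent factor of `P_n`. -/
def unipCoeff (q : ℂ) (i k : ℕ) : ℂ :=
  q ^ ((2 * (k : ℤ) + 1) * ((k : ℤ) - (i : ℤ))) *
    (qp (q ^ 2) (q ^ 2) k * qp (q ^ 2) (q ^ 2) (k + i) /
      (qp (q ^ 2) (q ^ 2) (2 * k) * qp (q ^ 2) (q ^ 2) i))

/-- The entry `(i, k)` of the upper unipotent left factor of `P_n` at `(z + z⁻¹) / 2`. This factor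
is the transpose of `Linv`; its entries are indexed by `ℕ`, so that the shifts of `i` and `k` in
the intertwining relations need no bounds. -/
def unipEntry (q : ℂ) (i k : ℕ) (z : ℂ) : ℂ :=
  if i ≤ k then unipCoeff q i k * Chat (q ^ 2) ((q ^ k) ^ 2)⁻¹ (k - i) z else 0

lemma unipEntry_of_lt (q : ℂ) {i k : ℕ} (h : k < i) (z : ℂ) : unipEntry q i k z = 0 :=
  if_neg h.not_ge

lemma unipEntry_add (q : ℂ) (i N : ℕ) (z : ℂ) :
    unipEntry q i (i + N) z =
      unipCoeff q i (i + N) * Chat (q ^ 2) ((q ^ (i + N)) ^ 2)⁻¹ N z := by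
  rw [unipEntry, if_pos (Nat.le_add_right i N), Nat.add_sub_cancel_left]

section unipEntry

variable {q : ℂ}

lemma unipEntry_self (hq : IsGeneric q) (k : ℕ) (z : ℂ) : unipEntry q k k z = 1 := by
  have hk := hq.qp_pow_ne_zero two_ne_zero k
  have h2k := hq.qp_pow_ne_zero two_ne_zero (2 * k)
  rw [unipEntry, if_pos le_rfl, Nat.sub_self, Chat_zero, unipCoeff, ← two_mul, sub_self, mul_zero,
    zpow_zero, mul_comm (qp (q ^ 2) (q ^ 2) k), div_self (mul_ne_zero h2k hk)]
  simp

lemma unipCoeff_succ_left (hq : IsGeneric q) (i k : ℕ) :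
    unipCoeff q (i + 1) k * (q * (q ^ k) ^ 2 * (1 - q ^ 2 * (q ^ i) ^ 2)) =
      unipCoeff q i k * (1 - q ^ 2 * (q ^ k) ^ 2 * (q ^ i) ^ 2) := by
  have hpow : q ^ ((2 * (k : ℤ) + 1) * ((k : ℤ) - (i : ℤ))) =
      q ^ ((2 * (k : ℤ) + 1) * ((k : ℤ) - ((i + 1 : ℕ) : ℤ))) * (q * (q ^ k) ^ 2) := by
    rw [← pow_mul, ← pow_succ', ← zpow_natCast, ← zpow_add₀ hq.ne_zero]
    congr 1
    push_cast
    ring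
  have hi := hq.qp_pow_ne_zero two_ne_zero i
  have h2k := hq.qp_pow_ne_zero two_ne_zero (2 * k)
  have hfactor : 1 - q ^ 2 * (q ^ 2) ^ i ≠ 0 :=
    hq.one_sub_ne_zero (n := 2 * i + 2) (by omega) (by ring)
  rw [unipCoeff, unipCoeff, hpow, ← add_assoc k i 1, qp_succ, qp_succ, pow_right_comm q i 2]
  field_simp
  ring

lemma unipCoeff_succ_right (hq : IsGeneric q) (i k : ℕ) :
    unipCoeff q i (k + 1) *
        ((q ^ i) ^ 2 * (1 - q ^ 2 * (q ^ k) ^ 4) * (1 + q ^ 2 * (q ^ k) ^ 2)) =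
      unipCoeff q i k * (q ^ 3 * (q ^ k) ^ 4 * (1 - q ^ 2 * (q ^ k) ^ 2 * (q ^ i) ^ 2)) := by
  have hpow : q ^ ((2 * ((k + 1 : ℕ) : ℤ) + 1) * (((k + 1 : ℕ) : ℤ) - (i : ℤ))) * (q ^ i) ^ 2 =
      q ^ ((2 * (k : ℤ) + 1) * ((k : ℤ) - (i : ℤ))) * (q ^ 3 * (q ^ k) ^ 4) := by
    rw [← pow_mul, ← pow_mul, ← pow_add, ← zpow_natCast, ← zpow_natCast, ← zpow_add₀ hq.ne_zero,
      ← zpow_add₀ hq.ne_zero]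
    congr 1
    push_cast
    ring
  have hi := hq.qp_pow_ne_zero two_ne_zero i
  have h2k := hq.qp_pow_ne_zero two_ne_zero (2 * k)
  have hodd : 1 - q ^ 2 * (q ^ 2) ^ (2 * k) = 1 - q ^ 2 * (q ^ k) ^ 4 := by ring
  have heven : 1 - q ^ 2 * (q ^ 2) ^ (2 * k + 1) =
      (1 - q ^ 2 * (q ^ 2) ^ k) * (1 + q ^ 2 * (q ^ k) ^ 2) := by ring
  have hne₁ : 1 - q ^ 2 * (q ^ k) ^ 4 ≠ 0 :=
    hq.one_sub_ne_zero (n := 4 * k + 2) (by omega) (by ring)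
  have hne₂ : 1 - q ^ 2 * (q ^ 2) ^ k ≠ 0 :=
    hq.one_sub_ne_zero (n := 2 * k + 2) (by omega) (by ring)
  have hne₃ : 1 + q ^ 2 * (q ^ k) ^ 2 ≠ 0 := hq.one_add_ne_zero (n := 2 * k + 2) (by ring)
  rw [unipCoeff, unipCoeff, show k + 1 + i = k + i + 1 by omega,
    show 2 * (k + 1) = 2 * k + 1 + 1 by omega, qp_succ, qp_succ, qp_succ _ _ (2 * k + 1), qp_succ,
    hodd, heven]
  linear_combination (norm := skip) qp (q ^ 2) (q ^ 2) k * (qp (q ^ 2) (q ^ 2) (k + i) *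
    (1 - q ^ 2 * (q ^ 2) ^ (k + i))) / (qp (q ^ 2) (q ^ 2) (2 * k) * qp (q ^ 2) (q ^ 2) i) * hpow
  generalize 1 - q ^ 2 * (q ^ k) ^ 4 = d₁, 1 - q ^ 2 * (q ^ 2) ^ k = d₂,
    1 + q ^ 2 * (q ^ k) ^ 2 = d₃ at *
  field_simp
  ring

lemma unipEntry_inv (q : ℂ) (i k : ℕ) (z : ℂ) : unipEntry q i k z⁻¹ = unipEntry q i k z := by
  simp only [unipEntry, Chat_inv]

lemma unipEntry_mul_inv_mul (hq : IsGeneric q) (i k : ℕ) (z : ℂ) :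
    unipEntry q i k (q * (q * z)⁻¹) = unipEntry q i k z := by
  rw [mul_inv, mul_inv_cancel_left₀ hq.ne_zero, unipEntry_inv]

lemma unipEntry_sub_unipEntry_mul (hq : IsGeneric q) (i k : ℕ) {z : ℂ} (hz : z ≠ 0) :
    (1 - q ^ 2 * (q ^ k) ^ 2 * (q ^ i) ^ 2) *
        (q ^ i * unipEntry q i k z - q ^ k * unipEntry q i k (q * z)) =
      q ^ k * (1 - q ^ 2 * (q ^ i) ^ 2) * z *
        (q * q ^ k * q ^ i * unipEntry q (i + 1) k z - unipEntry q (i + 1) k (q * z)) := by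
  rcases lt_or_ge k i with hki | hik
  · simp [unipEntry_of_lt q hki, unipEntry_of_lt q (hki.trans i.lt_succ_self)]
  obtain ⟨_ | N, rfl⟩ := Nat.exists_eq_add_of_le hik
  · simp [unipEntry_self hq, unipEntry_of_lt]
  have hq0 := hq.ne_zero
  have hx := hq.pow_ne_zero i
  have hd := hq.pow_ne_zero N
  have hb : q ^ (i + (N + 1)) = q ^ i * q ^ N * q := by ring
  have hcoeff := unipCoeff_succ_left hq i (i + (N + 1))
  have hChat := Chat_sub_Chat_mul hq ((q ^ (i + (N + 1))) ^ 2)⁻¹ N hz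
  have hsucc (w : ℂ) : unipEntry q (i + 1) (i + (N + 1)) w =
      unipCoeff q (i + 1) (i + (N + 1)) * Chat (q ^ 2) ((q ^ (i + (N + 1))) ^ 2)⁻¹ N w := by
    rw [show i + (N + 1) = i + 1 + N by omega, unipEntry_add]
  rw [unipEntry_add, unipEntry_add, hsucc, hsucc]
  generalize unipCoeff q i (i + (N + 1)) = c₀, unipCoeff q (i + 1) (i + (N + 1)) = c₁ at *
  rw [hb] at *
  generalize hβ : ((q ^ i * q ^ N * q) ^ 2)⁻¹ = β at *
  linear_combination (norm := (rw [← hβ]; field_simp; ring))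
    c₀ * q ^ i * (1 - q ^ 2 * (q ^ i * q ^ N * q) ^ 2 * (q ^ i) ^ 2) * hChat -
      z * (q ^ i * Chat (q ^ 2) β N z - Chat (q ^ 2) β N (q * z) / (q * (q ^ i * q ^ N * q))) *
        hcoeff

lemma unipEntry_mul_sub_unipEntry (hq : IsGeneric q) (i k : ℕ) {z : ℂ} (hz : z ≠ 0) :
    q * z * (1 - q ^ 2 * (q ^ k) ^ 2 * (q ^ i) ^ 2) *
        (q ^ i * unipEntry q i k (q * z) - q ^ k * unipEntry q i k z) =
      q ^ k * (1 - q ^ 2 * (q ^ i) ^ 2) *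
        (q * q ^ k * q ^ i * unipEntry q (i + 1) k (q * z) - unipEntry q (i + 1) k z) := by
  have hq0 := hq.ne_zero
  have hinv := unipEntry_sub_unipEntry_mul hq i k (inv_ne_zero (mul_ne_zero hq0 hz))
  simp only [unipEntry_mul_inv_mul hq, unipEntry_inv] at hinv
  linear_combination (norm := (field_simp; ring)) q * z * hinv

lemma unipEntry_intertwine_left (hq : IsGeneric q) (i k : ℕ) {z : ℂ} (hz : z ≠ 0) :
    -((1 - q ^ 2 * (q ^ i) ^ 2) * z / q ^ i) * unipEntry q (i + 1) k (q * z) +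
        (1 - q ^ 2 * (q ^ i) ^ 2 * z ^ 2) / q ^ i * unipEntry q i k (q * z) =
      (1 - q ^ 2 * (q ^ k) ^ 2 * z ^ 2) / q ^ k * unipEntry q i k z := by
  have hx := hq.pow_ne_zero i
  have hb := hq.pow_ne_zero k
  have hne : 1 - q ^ 2 * (q ^ k) ^ 2 * (q ^ i) ^ 2 ≠ 0 :=
    hq.one_sub_ne_zero (n := 2 * k + 2 * i + 2) (by omega) (by ring)
  apply mul_left_cancel₀ hne
  linear_combination (norm := (field_simp; ring))
    -(q * z * unipEntry_mul_sub_unipEntry hq i k hz) -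
      1 / (q ^ i * q ^ k) * unipEntry_sub_unipEntry_mul hq i k hz

lemma unipEntry_eq_succ_left (hq : IsGeneric q) (i k : ℕ) {z : ℂ} (hz : z ≠ 0) :
    q * (1 - q ^ 2 * (q ^ k) ^ 2 * (q ^ i) ^ 2) * ((q ^ i) ^ 2 - (q ^ k) ^ 2) * z *
        unipEntry q i k (q * z) =
      q ^ k * (1 - q ^ 2 * (q ^ i) ^ 2) *
        (q * q ^ k * ((q ^ i) ^ 2 - z ^ 2) * unipEntry q (i + 1) k (q * z) -
          q ^ i * (1 - q ^ 2 * (q ^ k) ^ 2 * z ^ 2) * unipEntry q (i + 1) k z) := by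
  linear_combination q ^ i * unipEntry_mul_sub_unipEntry hq i k hz +
    q * z * q ^ k * unipEntry_sub_unipEntry_mul hq i k hz

lemma unipEntry_eq_succ_right (hq : IsGeneric q) (i k : ℕ) {z : ℂ} (hz : z ≠ 0) :
    q ^ k * (1 - q ^ 2 * (q ^ k) ^ 2 * (q ^ i) ^ 2) * (1 - q ^ 2 * (q ^ k) ^ 2) *
        (1 - q ^ 2 * (q ^ k) ^ 2 * z ^ 2) * unipEntry q i k z =
      (1 - q ^ 2 * (q ^ k) ^ 4) * (1 + q ^ 2 * (q ^ k) ^ 2) * z *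
        (q * q ^ k * (1 + (q ^ i) ^ 2) * unipEntry q i (k + 1) z -
          q ^ i * (1 + q ^ 2 * (q ^ k) ^ 2) * unipEntry q i (k + 1) (q * z)) := by
  rcases lt_or_ge k i with hki | hik
  · rcases Nat.lt_or_eq_of_le hki with hlt | rfl
    · simp [unipEntry_of_lt q hki, unipEntry_of_lt q hlt]
    · rw [unipEntry_of_lt q hki, unipEntry_self hq, unipEntry_self hq, Nat.succ_eq_add_one,
        pow_succ]
      ring
  obtain ⟨N, rfl⟩ := Nat.exists_eq_add_of_le hik
  have hq0 := hq.ne_zero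
  have hx := hq.pow_ne_zero i
  have hd := hq.pow_ne_zero N
  have hb : q ^ (i + N) = q ^ i * q ^ N := pow_add q i N
  have hcoeff := unipCoeff_succ_right hq i (i + N)
  have hβ : 1 - ((q ^ (i + N + 1)) ^ 2)⁻¹ ≠ 0 := sub_ne_zero.2 <| .symm <| inv_ne_one.2 <| .symm <|
    sub_ne_zero.1 <| hq.one_sub_ne_zero (n := 2 * (i + N + 1)) (by omega) (by ring)
  have hChat := Chat_mul_sq_of_mul hq hβ N hz
  have hβq : ((q ^ (i + N + 1)) ^ 2)⁻¹ * q ^ 2 = ((q ^ (i + N)) ^ 2)⁻¹ := by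
    rw [pow_succ]
    field_simp
    ring
  rw [hβq] at hChat
  rw [add_assoc i N 1, unipEntry_add, unipEntry_add, unipEntry_add, ← add_assoc]
  generalize unipCoeff q i (i + N) = c₀, unipCoeff q i (i + N + 1) = c₁,
    Chat (q ^ 2) ((q ^ (i + N)) ^ 2)⁻¹ N z = u at *
  generalize Chat (q ^ 2) ((q ^ (i + N + 1)) ^ 2)⁻¹ (N + 1) z = y₀,
    Chat (q ^ 2) ((q ^ (i + N + 1)) ^ 2)⁻¹ (N + 1) (q * z) = y₁ at *
  rw [pow_succ q (i + N), hb] at *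
  linear_combination (norm := (field_simp; ring))
    -(c₀ * q ^ 4 * (q ^ i * q ^ N) ^ 5 * (1 - q ^ 2 * (q ^ i * q ^ N) ^ 2 * (q ^ i) ^ 2)) * hChat +
      q ^ i * q ^ N * q * z * ((1 + ((q ^ i * q ^ N * q) ^ 2)⁻¹) * (q ^ (N + 1) * y₁) -
        (1 + ((q ^ i * q ^ N * q) ^ 2)⁻¹ * (q ^ 2) ^ (N + 1)) * y₀) * hcoeff

lemma unipEntry_mul_eq_succ_right (hq : IsGeneric q) (i k : ℕ) {z : ℂ} (hz : z ≠ 0) :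
    q * q ^ k * (1 - q ^ 2 * (q ^ k) ^ 2 * (q ^ i) ^ 2) * (1 - q ^ 2 * (q ^ k) ^ 2) *
        (z ^ 2 - (q ^ k) ^ 2) * unipEntry q i k (q * z) =
      (1 - q ^ 2 * (q ^ k) ^ 4) * (1 + q ^ 2 * (q ^ k) ^ 2) * z *
        (q * q ^ k * (1 + (q ^ i) ^ 2) * unipEntry q i (k + 1) (q * z) -
          q ^ i * (1 + q ^ 2 * (q ^ k) ^ 2) * unipEntry q i (k + 1) z) := by
  have hq0 := hq.ne_zero
  have hinv := unipEntry_eq_succ_right hq i k (inv_ne_zero (mul_ne_zero hq0 hz))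
  simp only [unipEntry_mul_inv_mul hq, unipEntry_inv] at hinv
  linear_combination (norm := (field_simp; ring)) q * z ^ 2 * hinv

lemma unipEntry_succ_right_eq (hq : IsGeneric q) (i k : ℕ) {z : ℂ} (hz : z ≠ 0) :
    (1 - q ^ 2 * (q ^ k) ^ 4) * (1 + q ^ 2 * (q ^ k) ^ 2) *
        ((q ^ i) ^ 2 - q ^ 2 * (q ^ k) ^ 2) * z * unipEntry q i (k + 1) z =
      q * q ^ k * (1 - q ^ 2 * (q ^ k) ^ 2) *
        (q ^ i * (1 + q ^ 2 * (q ^ k) ^ 2) * ((q ^ k) ^ 2 - z ^ 2) * unipEntry q i k (q * z) -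
          q ^ k * (1 + (q ^ i) ^ 2) * (1 - q ^ 2 * (q ^ k) ^ 2 * z ^ 2) * unipEntry q i k z) := by
  have hne : 1 - q ^ 2 * (q ^ k) ^ 2 * (q ^ i) ^ 2 ≠ 0 :=
    hq.one_sub_ne_zero (n := 2 * k + 2 * i + 2) (by omega) (by ring)
  apply mul_left_cancel₀ hne
  linear_combination q * q ^ k * (1 + (q ^ i) ^ 2) * unipEntry_eq_succ_right hq i k hz +
    q ^ i * (1 + q ^ 2 * (q ^ k) ^ 2) * unipEntry_mul_eq_succ_right hq i k hz

end unipEntry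

/-- The diagonal entries of `M₂(z)` up to the common factor `q / ((1 - q²)² (1 - z²))`, with `t` in
place of `q ^ L`. -/
def secondDiag (q t : ℂ) (z : ℂ) (i : ℕ) : ℂ :=
  q ^ i / t - q ^ 2 * t / q ^ i * z ^ 2

/-- The entries `(i + 1, i)` of `M₂(z)`, which are also those of `U(z)⁻¹ M₂(z) U(qz)`, where `U` is
the unipotent factor of `P_n`, in the normalisation of `secondDiag`. -/
def secondLower (q t : ℂ) (z : ℂ) (i : ℕ) : ℂ :=
  -(q * (q ^ i / t - t / q ^ i) * z)

/-- The diagonal entries of `U(z)⁻¹ M₂(z) U(qz)`, where `U` is the unipotent factor of `P_n`, in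
the normalisation of `secondDiag`. -/
def conjDiag (q t : ℂ) (z : ℂ) (k : ℕ) : ℂ :=
  2 * q ^ k * (1 + q ^ 2 * t ^ 2) / (t * (1 + (q ^ k) ^ 2) * (1 + q ^ 2 * (q ^ k) ^ 2)) *
    (1 - q ^ 2 * (q ^ k) ^ 2 * z ^ 2)

/-- The entries `(k, k + 1)` of `U(z)⁻¹ M₂(z) U(qz)`, where `U` is the unipotent factor of `P_n`, in
the normalisation of `secondDiag`. -/
def conjUpper (q t : ℂ) (z : ℂ) (k : ℕ) : ℂ :=
  -(q ^ k * (1 - q ^ 2 * (q ^ k) ^ 2) ^ 2 * (1 - q ^ 4 * t ^ 2 * (q ^ k) ^ 2) /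
      (t * (1 - q ^ 6 * (q ^ k) ^ 4) * (1 - q ^ 2 * (q ^ k) ^ 4) * (1 + q ^ 2 * (q ^ k) ^ 2) ^ 2)) *
    ((1 - q ^ 2 * (q ^ k) ^ 2 * z ^ 2) * (1 - q ^ 4 * (q ^ k) ^ 2 * z ^ 2) / z)

section Intertwine

variable {q : ℂ}

lemma delay_secondLower_mul_unipEntry (hq : IsGeneric q) {t z : ℂ} (ht : t ≠ 0) (hz : z ≠ 0)
    (i k : ℕ) :
    t * q ^ i * ((1 - (q ^ k) ^ 2 * (q ^ i) ^ 2) * ((q ^ i) ^ 2 - q ^ 2 * (q ^ k) ^ 2)) *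
        delay (fun l => secondLower q t z l * unipEntry q l k (q * z)) i =
      ((q ^ i) ^ 2 - q ^ 2 * t ^ 2) * (q ^ k * (1 - (q ^ i) ^ 2)) *
        (q ^ i * (1 - q ^ 2 * (q ^ k) ^ 2 * z ^ 2) * unipEntry q i k z -
          q ^ k * ((q ^ i) ^ 2 - q ^ 2 * z ^ 2) * unipEntry q i k (q * z)) := by
  rcases i with _ | i
  · simp [delay]
  · have hx := hq.pow_ne_zero i
    rw [delay, secondLower, pow_succ q i]
    linear_combination (norm := (field_simp; ring))
      -(q ^ 3 * ((q ^ i) ^ 2 - t ^ 2)) * unipEntry_eq_succ_left hq i k hz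

lemma delay_unipEntry_mul_conjUpper (hq : IsGeneric q) {t z : ℂ} (ht : t ≠ 0) (hz : z ≠ 0)
    (i k : ℕ) :
    t * ((1 - q ^ 2 * (q ^ k) ^ 4) * (1 + (q ^ k) ^ 2)) * (1 - (q ^ k) ^ 2 * (q ^ i) ^ 2) *
        delay (fun l => unipEntry q i l z * conjUpper q t z l) k =
      (1 - (q ^ k) ^ 2) * (1 - q ^ 2 * t ^ 2 * (q ^ k) ^ 2) * (1 - q ^ 2 * (q ^ k) ^ 2 * z ^ 2) *
        (q ^ i * (1 + (q ^ k) ^ 2) * unipEntry q i k (q * z) -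
          q ^ k * (1 + (q ^ i) ^ 2) * unipEntry q i k z) := by
  rcases k with _ | k
  · simp [delay]
  · have hne₁ : 1 - q ^ 2 * (q ^ k) ^ 4 ≠ 0 :=
      hq.one_sub_ne_zero (n := 4 * k + 2) (by omega) (by ring)
    have hne₂ : 1 - q ^ 6 * (q ^ k) ^ 4 ≠ 0 :=
      hq.one_sub_ne_zero (n := 4 * k + 6) (by omega) (by ring)
    have hne₃ : 1 + q ^ 2 * (q ^ k) ^ 2 ≠ 0 := hq.one_add_ne_zero (n := 2 * k + 2) (by ring)
    have hstep := unipEntry_eq_succ_right hq i k hz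
    rw [delay, conjUpper, pow_succ q k, show 1 - q ^ 2 * (q ^ k * q) ^ 4 = 1 - q ^ 6 * (q ^ k) ^ 4
      by ring, show 1 + (q ^ k * q) ^ 2 = 1 + q ^ 2 * (q ^ k) ^ 2 by ring]
    generalize 1 - q ^ 2 * (q ^ k) ^ 4 = d₁, 1 - q ^ 6 * (q ^ k) ^ 4 = d₂,
      1 + q ^ 2 * (q ^ k) ^ 2 = d₃ at *
    linear_combination (norm := (field_simp; ring))
      -((1 - q ^ 2 * (q ^ k) ^ 2) * (1 - q ^ 4 * t ^ 2 * (q ^ k) ^ 2) *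
        (1 - q ^ 4 * (q ^ k) ^ 2 * z ^ 2) / (d₁ * d₃ * z)) * hstep

lemma unipEntry_succ_right_mul_secondLower (hq : IsGeneric q) {t z : ℂ} (ht : t ≠ 0) (hz : z ≠ 0)
    (i k : ℕ) :
    t * ((1 - q ^ 2 * (q ^ k) ^ 4) * (1 + q ^ 2 * (q ^ k) ^ 2)) *
        ((q ^ i) ^ 2 - q ^ 2 * (q ^ k) ^ 2) * (unipEntry q i (k + 1) z * secondLower q t z k) =
      q ^ 2 * ((q ^ k) ^ 2 - t ^ 2) * (1 - q ^ 2 * (q ^ k) ^ 2) *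
        (q ^ k * (1 + (q ^ i) ^ 2) * (1 - q ^ 2 * (q ^ k) ^ 2 * z ^ 2) * unipEntry q i k z -
          q ^ i * (1 + q ^ 2 * (q ^ k) ^ 2) * ((q ^ k) ^ 2 - z ^ 2) * unipEntry q i k (q * z)) := by
  have hb := hq.pow_ne_zero k
  rw [secondLower]
  linear_combination (norm := (field_simp; ring))
    -(q * ((q ^ k) ^ 2 - t ^ 2) / q ^ k) * unipEntry_succ_right_eq hq i k hz

lemma unipEntry_zero_intertwine_right (hq : IsGeneric q) {t z : ℂ} (ht : t ≠ 0) (hz : z ≠ 0) :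
    secondDiag q t z 0 * unipEntry q 0 0 (q * z) =
      unipEntry q 0 0 z * conjDiag q t z 0 + unipEntry q 0 1 z * secondLower q t z 0 := by
  have hsub : 1 - q ^ 2 ≠ 0 := hq.one_sub_pow_ne_zero two_ne_zero
  have hadd : 1 + q ^ 2 ≠ 0 := hq.one_add_pow_ne_zero 2
  have hlower := unipEntry_succ_right_mul_secondLower hq ht hz 0 0
  rw [unipEntry_self hq, unipEntry_self hq] at *
  simp only [secondDiag, conjDiag, pow_zero, one_pow, mul_one, one_mul, zero_add] at *
  generalize unipEntry q 0 1 z * secondLower q t z 0 = w at *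
  generalize hd : 1 - q ^ 2 = d, he : 1 + q ^ 2 = e at *
  linear_combination (norm := (field_simp; rw [← hd, ← he]; ring))
    -1 / (t * (d ^ 2 * e)) * hlower

lemma unipEntry_intertwine_right (hq : IsGeneric q) {t z : ℂ} (ht : t ≠ 0) (hz : z ≠ 0)
    (i k : ℕ) :
    secondDiag q t z i * unipEntry q i k (q * z) +
        delay (fun l => secondLower q t z l * unipEntry q l k (q * z)) i =
      delay (fun l => unipEntry q i l z * conjUpper q t z l) k +
        unipEntry q i k z * conjDiag q t z k + unipEntry q i (k + 1) z * secondLower q t z k := by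
  rcases eq_or_ne i (k + 1) with rfl | hik
  · have hdelay : delay (fun l => unipEntry q (k + 1) l z * conjUpper q t z l) k = 0 := by
      rcases k with _ | k
      · rfl
      · rw [delay, unipEntry_of_lt q (by omega), zero_mul]
    rw [hdelay, delay, unipEntry_self hq, unipEntry_self hq, unipEntry_of_lt q k.lt_succ_self,
      unipEntry_of_lt q k.lt_succ_self]
    ring
  by_cases hzero : i = 0 ∧ k = 0
  · obtain ⟨rfl, rfl⟩ := hzero
    simpa only [delay, add_zero, zero_add] using unipEntry_zero_intertwine_right hq ht hz
  have hx := hq.pow_ne_zero i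
  have hne₁ : 1 - (q ^ k) ^ 2 * (q ^ i) ^ 2 ≠ 0 :=
    hq.one_sub_ne_zero (n := 2 * k + 2 * i) (by omega) (by ring)
  have hne₂ : (q ^ i) ^ 2 - q ^ 2 * (q ^ k) ^ 2 ≠ 0 := by
    rw [show q ^ 2 * (q ^ k) ^ 2 = q ^ (2 * k + 2) by ring, ← pow_mul, sub_ne_zero]
    exact hq.pow_ne_pow (by omega)
  have hd₁ : 1 - q ^ 2 * (q ^ k) ^ 4 ≠ 0 :=
    hq.one_sub_ne_zero (n := 4 * k + 2) (by omega) (by ring)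
  have hd₂ : 1 + (q ^ k) ^ 2 ≠ 0 := hq.one_add_ne_zero (n := 2 * k) (by ring)
  have hd₃ : 1 + q ^ 2 * (q ^ k) ^ 2 ≠ 0 := hq.one_add_ne_zero (n := 2 * k + 2) (by ring)
  have hleft := delay_secondLower_mul_unipEntry hq ht hz i k
  have hupper := delay_unipEntry_mul_conjUpper hq ht hz i k
  have hlower := unipEntry_succ_right_mul_secondLower hq ht hz i k
  apply mul_left_cancel₀ (mul_ne_zero hne₁ hne₂)
  rw [secondDiag, conjDiag]
  generalize delay _ i = u, delay _ k = v, unipEntry q i (k + 1) z * secondLower q t z k = w at *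
  generalize q ^ i = x, q ^ k = b at *
  generalize he₁ : 1 - q ^ 2 * b ^ 4 = d₁, he₂ : 1 + b ^ 2 = d₂,
    he₃ : 1 + q ^ 2 * b ^ 2 = d₃ at *
  linear_combination (norm := (field_simp; rw [← he₁, ← he₂, ← he₃]; ring))
    1 / (t * x) * hleft - (x ^ 2 - q ^ 2 * b ^ 2) / (t * d₁ * d₂) * hupper -
      (1 - b ^ 2 * x ^ 2) / (t * d₁ * d₃) * hlower

end Intertwine

/-! ### The columns of the right factor of `P_n` -/

/-- The first part of the scalar coefficient of the entry `k` of a column of the right factor of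
`P_n`; here `m = n + j` for the column `j`. -/
def colHead (q : ℂ) (L m k : ℕ) : ℂ :=
  (-1) ^ k * q ^ ((m : ℤ) * (2 * k + 1) + 2 * k * ((L : ℤ) + 1) - (k : ℤ) ^ 2) *
    (qp ((q ^ L) ^ 2)⁻¹ (q ^ 2) k * qp ((q ^ m) ^ 2)⁻¹ (q ^ 2) k /
      (qp (q ^ 2) (q ^ 2) k * qp (q ^ (2 * L + 4)) (q ^ 2) k))

/-- The second part of the scalar coefficient of the entry `k` of a column of the right factor of
`P_n`; here `N` is the degree of this entry. -/
def colTail (q : ℂ) (k N : ℕ) : ℂ :=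
  qp (q ^ 2) (q ^ 2) N / qp (q ^ (4 * k + 4)) (q ^ 2) N

/-- The entry `k` of a column of the right factor of `P_n` at `(z + z⁻¹) / 2`, up to its q-Racah
factor `racahSeq q L m j k`; here `m = n + j` for the column `j`. -/
def colEntry (q : ℂ) (L m k : ℕ) (z : ℂ) : ℂ :=
  if k ≤ m then
    colHead q L m k * colTail q k (m - k) * Chat (q ^ 2) (q ^ 2 * (q ^ k) ^ 2) (m - k) z
  else 0

lemma colEntry_of_lt (q : ℂ) (L : ℕ) {m k : ℕ} (h : m < k) (z : ℂ) : colEntry q L m k z = 0 :=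
  if_neg h.not_ge

lemma colEntry_add (q : ℂ) (L k N : ℕ) (z : ℂ) :
    colEntry q L (k + N) k z = colHead q L (k + N) k * colTail q k N *
      Chat (q ^ 2) (q ^ 2 * (q ^ k) ^ 2) N z := by
  rw [colEntry, if_pos (Nat.le_add_right k N), Nat.add_sub_cancel_left]

section colEntry

variable {q : ℂ}

lemma colHead_of_lt (hq : IsGeneric q) {L k : ℕ} (h : L < k) (m : ℕ) : colHead q L m k = 0 := by
  have hL : ((q ^ L) ^ 2)⁻¹ * (q ^ 2) ^ L = 1 := by
    rw [pow_right_comm q 2 L]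
    exact inv_mul_cancel₀ (pow_ne_zero 2 (hq.pow_ne_zero L))
  rw [colHead, qp_eq_zero h hL]
  ring

lemma colHead_succ (hq : IsGeneric q) (L m k : ℕ) :
    colHead q L m (k + 1) *
        ((q ^ k) ^ 2 * (1 - q ^ 2 * (q ^ k) ^ 2) * (1 - q ^ 4 * (q ^ L) ^ 2 * (q ^ k) ^ 2)) =
      -(q * ((q ^ L) ^ 2 - (q ^ k) ^ 2) * ((q ^ m) ^ 2 - (q ^ k) ^ 2)) * colHead q L m k := by
  have hpow : q ^ ((m : ℤ) * (2 * (k + 1 : ℕ) + 1) + 2 * (k + 1 : ℕ) * ((L : ℤ) + 1) -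
      ((k + 1 : ℕ) : ℤ) ^ 2) * (q ^ k) ^ 2 =
      q ^ ((m : ℤ) * (2 * k + 1) + 2 * k * ((L : ℤ) + 1) - (k : ℤ) ^ 2) *
        (q * (q ^ L) ^ 2 * (q ^ m) ^ 2) := by
    rw [← pow_mul, ← pow_mul, ← pow_mul, ← pow_succ', ← pow_add, ← zpow_natCast, ← zpow_natCast,
      ← zpow_add₀ hq.ne_zero, ← zpow_add₀ hq.ne_zero]
    congr 1
    push_cast
    ring
  have hL := hq.pow_ne_zero L
  have hm := hq.pow_ne_zero m
  have hk := hq.qp_pow_ne_zero two_ne_zero k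
  have hLk := hq.qp_pow_ne_zero (a := 2 * L + 4) (by omega) k
  have hne₁ : 1 - q ^ 2 * (q ^ k) ^ 2 ≠ 0 :=
    hq.one_sub_ne_zero (n := 2 * k + 2) (by omega) (by ring)
  have hne₂ : 1 - q ^ 4 * (q ^ L) ^ 2 * (q ^ k) ^ 2 ≠ 0 :=
    hq.one_sub_ne_zero (n := 2 * k + 2 * L + 4) (by omega) (by ring)
  have hbase : q ^ (2 * L + 4) * (q ^ k) ^ 2 = q ^ 4 * (q ^ L) ^ 2 * (q ^ k) ^ 2 := by ring
  simp only [colHead, qp_succ, pow_right_comm q 2 k, hbase]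
  generalize qp ((q ^ L) ^ 2)⁻¹ (q ^ 2) k = u, qp ((q ^ m) ^ 2)⁻¹ (q ^ 2) k = v,
    qp (q ^ 2) (q ^ 2) k = u', qp (q ^ (2 * L + 4)) (q ^ 2) k = v' at *
  generalize 1 - q ^ 2 * (q ^ k) ^ 2 = d₁, 1 - q ^ 4 * (q ^ L) ^ 2 * (q ^ k) ^ 2 = d₂ at *
  linear_combination (norm := (field_simp; ring))
    (-1) ^ (k + 1) * (u * (1 - ((q ^ L) ^ 2)⁻¹ * (q ^ k) ^ 2) *
      (v * (1 - ((q ^ m) ^ 2)⁻¹ * (q ^ k) ^ 2)) / (u' * v')) * hpow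

lemma colTail_succ (hq : IsGeneric q) (k N : ℕ) :
    colTail q (k + 1) N * ((1 - (q ^ 2) ^ (N + 1)) * (1 - (q ^ 2 * (q ^ k) ^ 2) ^ 2 *
      (q ^ 2) ^ (N + 1))) =
      colTail q k (N + 1) * ((1 - q ^ 4 * (q ^ k) ^ 4) * (1 - q ^ 6 * (q ^ k) ^ 4)) := by
  have hsucc := hq.qp_pow_ne_zero (a := 4 * (k + 1) + 4) (by omega) N
  have hk := hq.qp_pow_ne_zero (a := 4 * k + 4) (by omega) (N + 1)
  have hshift : qp (q ^ (4 * k + 4)) (q ^ 2) (N + 1) *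
      (1 - (q ^ 2 * (q ^ k) ^ 2) ^ 2 * (q ^ 2) ^ (N + 1)) =
      (1 - q ^ 4 * (q ^ k) ^ 4) * (1 - q ^ 6 * (q ^ k) ^ 4) *
        qp (q ^ (4 * (k + 1) + 4)) (q ^ 2) N := by
    have hbase : q ^ (4 * k + 4) * q ^ 2 * q ^ 2 = q ^ (4 * (k + 1) + 4) := by ring
    have htwo := qp_succ (q ^ (4 * k + 4)) (q ^ 2) (N + 1)
    rw [qp_succ', qp_succ' _ _ N, hbase] at htwo
    linear_combination -htwo
  rw [colTail, colTail, qp_succ _ _ N, ← pow_succ']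
  linear_combination (norm := (field_simp; ring)) qp (q ^ 2) (q ^ 2) N *
    (1 - (q ^ 2) ^ (N + 1)) / (qp (q ^ (4 * (k + 1) + 4)) (q ^ 2) N *
      qp (q ^ (4 * k + 4)) (q ^ 2) (N + 1)) * hshift

lemma colCoeff_succ (hq : IsGeneric q) (L k N : ℕ) :
    colHead q L (k + (N + 1)) (k + 1) * colTail q (k + 1) N *
        ((1 - q ^ 4 * (q ^ L) ^ 2 * (q ^ k) ^ 2) *
          (1 - q ^ 4 * (q ^ (k + (N + 1))) ^ 2 * (q ^ k) ^ 2)) =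
      -(q * ((q ^ k) ^ 2 - (q ^ L) ^ 2) * (1 + q ^ 2 * (q ^ k) ^ 2) * (1 - q ^ 6 * (q ^ k) ^ 4)) *
        (colHead q L (k + (N + 1)) k * colTail q k (N + 1)) := by
  have hb := hq.pow_ne_zero k
  have hne₁ : 1 - q ^ 2 * (q ^ k) ^ 2 ≠ 0 :=
    hq.one_sub_ne_zero (n := 2 * k + 2) (by omega) (by ring)
  have hne₂ : 1 - (q ^ 2) ^ (N + 1) ≠ 0 :=
    hq.one_sub_ne_zero (n := 2 * N + 2) (by omega) (by ring)
  have hhead := colHead_succ hq L (k + (N + 1)) k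
  have htail := colTail_succ hq k N
  have hv : q ^ (k + (N + 1)) = q ^ k * q ^ (N + 1) := pow_add q k (N + 1)
  rw [pow_right_comm q 2] at *
  apply mul_left_cancel₀ (mul_ne_zero (pow_ne_zero 2 hb) (mul_ne_zero hne₁ hne₂))
  rw [hv] at *
  linear_combination
    colTail q (k + 1) N * (1 - (q ^ (N + 1)) ^ 2) *
        (1 - q ^ 4 * (q ^ k * q ^ (N + 1)) ^ 2 * (q ^ k) ^ 2) * hhead -
      q * ((q ^ L) ^ 2 - (q ^ k) ^ 2) * ((q ^ k * q ^ (N + 1)) ^ 2 - (q ^ k) ^ 2) *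
        colHead q L (k + (N + 1)) k * htail

lemma colEntry_askeyWilson (hq : IsGeneric q) (L m k : ℕ) {z : ℂ} (hz : z ≠ 0) :
    q ^ m * ((1 - q ^ 2 * (q ^ k) ^ 2 * z ^ 2) * colEntry q L m k (q * z) +
        (q ^ 2 * (q ^ k) ^ 2 - z ^ 2) * colEntry q L m k (q⁻¹ * z)) =
      q ^ k * (1 + q ^ 2 * (q ^ m) ^ 2) * (1 - z ^ 2) * colEntry q L m k z := by
  rcases lt_or_ge m k with hmk | hkm
  · simp [colEntry_of_lt q L hmk]
  obtain ⟨N, rfl⟩ := Nat.exists_eq_add_of_le hkm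
  rw [colEntry_add, colEntry_add, colEntry_add, pow_add]
  linear_combination q ^ k * colHead q L (k + N) k * colTail q k N *
    Chat_askeyWilson hq (q ^ 2 * (q ^ k) ^ 2) N hz

lemma colEntry_succ_add (q : ℂ) (L k N : ℕ) (z : ℂ) :
    colEntry q L (k + (N + 1)) (k + 1) z =
      colHead q L (k + (N + 1)) (k + 1) * colTail q (k + 1) N *
        Chat (q ^ 2) (q ^ 2 * (q ^ k) ^ 2 * q ^ 2) N z := by
  rw [show k + (N + 1) = k + 1 + N by omega, colEntry_add, pow_succ q k, mul_pow, ← mul_assoc]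

lemma colEntry_lowering (hq : IsGeneric q) (L m k : ℕ) {z : ℂ} (hz : z ≠ 0) :
    -(q * ((q ^ k) ^ 2 - (q ^ L) ^ 2) * (1 + q ^ 2 * (q ^ k) ^ 2) * (1 - q ^ 6 * (q ^ k) ^ 4)) *
        q ^ m * z * (colEntry q L m k (q * z) - colEntry q L m k (q⁻¹ * z)) =
      q ^ k * (1 - q ^ 2 * (q ^ k) ^ 2) * (1 - z ^ 2) * (1 - q ^ 4 * (q ^ L) ^ 2 * (q ^ k) ^ 2) *
        (1 - q ^ 4 * (q ^ m) ^ 2 * (q ^ k) ^ 2) * colEntry q L m (k + 1) z := by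
  rcases lt_or_ge m k with hmk | hkm
  · simp [colEntry_of_lt q L hmk, colEntry_of_lt q L (hmk.trans k.lt_succ_self)]
  obtain ⟨_ | N, rfl⟩ := Nat.exists_eq_add_of_le hkm
  · simp [colEntry, Chat_zero]
  have hβ : 1 - q ^ 2 * (q ^ k) ^ 2 ≠ 0 :=
    hq.one_sub_ne_zero (n := 2 * k + 2) (by omega) (by ring)
  rw [colEntry_add, colEntry_add, colEntry_succ_add]
  have hcoeff := colCoeff_succ hq L k N
  have hChat := Chat_mul_sub_Chat_inv_mul hq hβ N hz
  have hv : q ^ (k + (N + 1)) = q ^ k * q ^ (N + 1) := pow_add q k (N + 1)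
  generalize colHead q L (k + (N + 1)) k * colTail q k (N + 1) = c₀,
    colHead q L (k + (N + 1)) (k + 1) * colTail q (k + 1) N = c₁ at *
  rw [hv] at *
  linear_combination (norm := (field_simp; ring))
    -(q * ((q ^ k) ^ 2 - (q ^ L) ^ 2) * (1 + q ^ 2 * (q ^ k) ^ 2) * (1 - q ^ 6 * (q ^ k) ^ 4)) *
        q ^ k * z * c₀ * hChat -
      q ^ k * (1 - q ^ 2 * (q ^ k) ^ 2) * (1 - z ^ 2) *
        Chat (q ^ 2) (q ^ 2 * (q ^ k) ^ 2 * q ^ 2) N z * hcoeff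

lemma colEntry_raising (hq : IsGeneric q) (L m k : ℕ) {z : ℂ} (hz : z ≠ 0) :
    q ^ m * q ^ k * (1 - q ^ 2 * (q ^ k) ^ 2) * (1 - q ^ 4 * (q ^ L) ^ 2 * (q ^ k) ^ 2) *
        ((1 - q ^ 2 * (q ^ k) ^ 2 * z ^ 2) * (1 - q ^ 4 * (q ^ k) ^ 2 * z ^ 2) *
            colEntry q L m (k + 1) (q * z) -
          (q ^ 2 * (q ^ k) ^ 2 - z ^ 2) * (q ^ 4 * (q ^ k) ^ 2 - z ^ 2) *
            colEntry q L m (k + 1) (q⁻¹ * z)) =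
      -(q ^ 2 * ((q ^ k) ^ 2 - (q ^ m) ^ 2) * ((q ^ k) ^ 2 - (q ^ L) ^ 2) *
        (1 + q ^ 2 * (q ^ k) ^ 2) * (1 - q ^ 6 * (q ^ k) ^ 4)) * z * (1 - z ^ 2) *
          colEntry q L m k z := by
  rcases lt_or_ge m k with hmk | hkm
  · simp [colEntry_of_lt q L hmk, colEntry_of_lt q L (hmk.trans k.lt_succ_self)]
  obtain ⟨_ | N, rfl⟩ := Nat.exists_eq_add_of_le hkm
  · simp [colEntry]
  have hβ : 1 - q ^ 2 * (q ^ k) ^ 2 ≠ 0 :=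
    hq.one_sub_ne_zero (n := 2 * k + 2) (by omega) (by ring)
  rw [colEntry_add, colEntry_succ_add, colEntry_succ_add]
  have hcoeff := colCoeff_succ hq L k N
  have hChat := Chat_mul_sq_raising hq hβ N hz
  have hv : q ^ (k + (N + 1)) = q ^ k * q ^ (N + 1) := pow_add q k (N + 1)
  generalize colHead q L (k + (N + 1)) k * colTail q k (N + 1) = c₀,
    colHead q L (k + (N + 1)) (k + 1) * colTail q (k + 1) N = c₁ at *
  rw [hv] at *
  linear_combination
    q * (q ^ k) ^ 2 * (1 - q ^ 4 * (q ^ L) ^ 2 * (q ^ k) ^ 2) * c₁ * hChat +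
      q * (q ^ k) ^ 2 * z * (1 - z ^ 2) * (1 - (q ^ (N + 1)) ^ 2) *
        Chat (q ^ 2) (q ^ 2 * (q ^ k) ^ 2) (N + 1) z * hcoeff

lemma conjDiag_mul_colEntry (hq : IsGeneric q) (L m k : ℕ) {z : ℂ} (hz : z ≠ 0) :
    conjDiag q (q ^ L) z k * colEntry q L m k (q * z) -
        z ^ 2 * (conjDiag q (q ^ L) z⁻¹ k * colEntry q L m k (q⁻¹ * z)) =
      (1 - z ^ 2) / (q ^ L * q ^ m) *
        (2 * (q ^ k) ^ 2 * (1 + q ^ 2 * (q ^ L) ^ 2) * (1 + q ^ 2 * (q ^ m) ^ 2) /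
          ((1 + (q ^ k) ^ 2) * (1 + q ^ 2 * (q ^ k) ^ 2))) * colEntry q L m k z := by
  have hL := hq.pow_ne_zero L
  have hm := hq.pow_ne_zero m
  have hd : (1 + (q ^ k) ^ 2) * (1 + q ^ 2 * (q ^ k) ^ 2) ≠ 0 :=
    mul_ne_zero (hq.one_add_ne_zero (n := 2 * k) (by ring))
      (hq.one_add_ne_zero (n := 2 * k + 2) (by ring))
  have haw := colEntry_askeyWilson hq L m k hz
  rw [conjDiag, conjDiag, mul_assoc (q ^ L)]
  generalize (1 + (q ^ k) ^ 2) * (1 + q ^ 2 * (q ^ k) ^ 2) = d at *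
  linear_combination (norm := (field_simp; ring))
    2 * q ^ k * (1 + q ^ 2 * (q ^ L) ^ 2) / (q ^ L * q ^ m * d) * haw

lemma conjUpper_mul_colEntry (hq : IsGeneric q) (L m k : ℕ) {z : ℂ} (hz : z ≠ 0) :
    conjUpper q (q ^ L) z k * colEntry q L m (k + 1) (q * z) -
        z ^ 2 * (conjUpper q (q ^ L) z⁻¹ k * colEntry q L m (k + 1) (q⁻¹ * z)) =
      (1 - z ^ 2) / (q ^ L * q ^ m) *
        (q ^ 2 * (1 - q ^ 2 * (q ^ k) ^ 2) * ((q ^ k) ^ 2 - (q ^ m) ^ 2) *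
          ((q ^ k) ^ 2 - (q ^ L) ^ 2) / ((1 - q ^ 2 * (q ^ k) ^ 4) * (1 + q ^ 2 * (q ^ k) ^ 2))) *
        colEntry q L m k z := by
  have hL := hq.pow_ne_zero L
  have hm := hq.pow_ne_zero m
  have hd₁ : 1 - q ^ 6 * (q ^ k) ^ 4 ≠ 0 :=
    hq.one_sub_ne_zero (n := 4 * k + 6) (by omega) (by ring)
  have hd₂ : 1 - q ^ 2 * (q ^ k) ^ 4 ≠ 0 :=
    hq.one_sub_ne_zero (n := 4 * k + 2) (by omega) (by ring)
  have hd₃ : 1 + q ^ 2 * (q ^ k) ^ 2 ≠ 0 := hq.one_add_ne_zero (n := 2 * k + 2) (by ring)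
  have hraise := colEntry_raising hq L m k hz
  rw [conjUpper, conjUpper]
  generalize 1 - q ^ 6 * (q ^ k) ^ 4 = d₁, 1 - q ^ 2 * (q ^ k) ^ 4 = d₂,
    1 + q ^ 2 * (q ^ k) ^ 2 = d₃ at *
  linear_combination (norm := (field_simp; ring))
    -((1 - q ^ 2 * (q ^ k) ^ 2) / (q ^ L * q ^ m * d₁ * d₂ * d₃ ^ 2 * z)) * hraise

lemma delay_secondLower_mul_colEntry (hq : IsGeneric q) (L m k : ℕ) (S : ℕ → ℂ) {z : ℂ}
    (hz : z ≠ 0) :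
    delay (fun l => secondLower q (q ^ L) z l * (S l * colEntry q L m l (q * z))) k -
        z ^ 2 * delay
          (fun l => secondLower q (q ^ L) z⁻¹ l * (S l * colEntry q L m l (q⁻¹ * z))) k =
      (1 - z ^ 2) / (q ^ L * q ^ m) *
        ((1 - (q ^ k) ^ 2) * (1 - q ^ 2 * (q ^ L) ^ 2 * (q ^ k) ^ 2) *
          (1 - q ^ 2 * (q ^ m) ^ 2 * (q ^ k) ^ 2) /
            ((1 + (q ^ k) ^ 2) * (1 - q ^ 2 * (q ^ k) ^ 4))) *
        delay S k * colEntry q L m k z := by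
  rcases k with _ | k
  · simp [delay]
  have hk := hq.pow_ne_zero k
  have hL := hq.pow_ne_zero L
  have hm := hq.pow_ne_zero m
  have hd₁ : 1 - q ^ 6 * (q ^ k) ^ 4 ≠ 0 :=
    hq.one_sub_ne_zero (n := 4 * k + 6) (by omega) (by ring)
  have hd₂ : 1 + q ^ 2 * (q ^ k) ^ 2 ≠ 0 := hq.one_add_ne_zero (n := 2 * k + 2) (by ring)
  have hlower := colEntry_lowering hq L m k hz
  rw [delay, delay, delay, secondLower, secondLower, pow_succ q k,
    show 1 + (q ^ k * q) ^ 2 = 1 + q ^ 2 * (q ^ k) ^ 2 by ring,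
    show 1 - q ^ 2 * (q ^ k * q) ^ 4 = 1 - q ^ 6 * (q ^ k) ^ 4 by ring]
  generalize 1 - q ^ 6 * (q ^ k) ^ 4 = d₁, 1 + q ^ 2 * (q ^ k) ^ 2 = d₂ at *
  linear_combination (norm := (field_simp; ring))
    S k / (q ^ k * q ^ L * q ^ m * d₁ * d₂) * hlower

/-- The entry `(k, j)` of the right factor of `P_n` at `(z + z⁻¹) / 2`, where `m = n + j`. -/
def rightEntry (q : ℂ) (L m j k : ℕ) (z : ℂ) : ℂ :=
  racahSeq q L m j k * colEntry q L m k z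

/-- The row `k` of `U(z)⁻¹ M₂(z) U(qz)`, where `U` is the unipotent factor of `P_n`, applied to the
sequence `f`, in the normalisation of `secondDiag`. -/
def conjRow (q t z : ℂ) (f : ℕ → ℂ) (k : ℕ) : ℂ :=
  conjUpper q t z k * f (k + 1) + conjDiag q t z k * f k +
    delay (fun l => secondLower q t z l * f l) k

lemma conjRow_rightEntry (hq : IsGeneric q) {L m j : ℕ} (hjL : j ≤ L) (hjm : j ≤ m) (k : ℕ)
    {z : ℂ} (hz : z ≠ 0) :
    conjRow q (q ^ L) z (fun l => rightEntry q L m j l (q * z)) k -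
        z ^ 2 * conjRow q (q ^ L) z⁻¹ (fun l => rightEntry q L m j l (q⁻¹ * z)) k =
      (1 - z ^ 2) / (q ^ L * q ^ m) *
        ((q ^ j) ^ 2 + q ^ 2 * (q ^ L) ^ 2 * (q ^ m) ^ 2 / (q ^ j) ^ 2) *
        rightEntry q L m j k z := by
  simp only [conjRow, rightEntry]
  linear_combination
    racahSeq q L m j (k + 1) * conjUpper_mul_colEntry hq L m k hz +
      racahSeq q L m j k * conjDiag_mul_colEntry hq L m k hz +
      delay_secondLower_mul_colEntry hq L m k (racahSeq q L m j) hz +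
      (1 - z ^ 2) / (q ^ L * q ^ m) * colEntry q L m k z * racahSeq_recurrence hq hjL hjm k

end colEntry

/-! ### Tridiagonal matrices -/

/-- The tridiagonal matrix of size `L + 1` with entries `a i` at `(i, i + 1)`, `d i` at `(i, i)` and
`c i` at `(i + 1, i)`. -/
def tridiag (L : ℕ) (a d c : ℕ → ℂ) : Matrix (Fin (L + 1)) (Fin (L + 1)) ℂ :=
  Matrix.of fun i j =>
    if (j : ℕ) = i + 1 then a i else if (j : ℕ) = i then d i else if (i : ℕ) = j + 1 then c j else 0

lemma transpose_tridiag (L : ℕ) (a d c : ℕ → ℂ) : (tridiag L a d c)ᵀ = tridiag L c d a := by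
  ext i j
  simp only [tridiag, Matrix.transpose_apply, Matrix.of_apply]
  split_ifs <;> first | rfl | omega | congr 1

lemma tridiag_mul_apply {L : ℕ} (a d c : ℕ → ℂ) {F : ℕ → ℕ → ℂ} (i j : Fin (L + 1))
    (hF : a L * F (L + 1) j = 0) :
    (tridiag L a d c * Matrix.of fun i j : Fin (L + 1) => F i j) i j =
      a i * F (i + 1) j + d i * F i j + delay (fun l => c l * F l j) i := by
  have hsplit (l : ℕ) : (if l = i + 1 then a i else if l = i then d i else
      if (i : ℕ) = l + 1 then c l else 0) * F l j = (if l = i + 1 then a i * F l j else 0) +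
        (if l = i then d i * F l j else 0) + if (i : ℕ) = l + 1 then c l * F l j else 0 := by
    split_ifs <;> first | omega | ring
  have hi := i.is_lt
  simp only [Matrix.mul_apply, tridiag, Matrix.of_apply]
  rw [Fin.sum_univ_eq_sum_range fun l => (if l = i + 1 then a i else if l = i then d i else
      if (i : ℕ) = l + 1 then c l else 0) * F l j]
  simp only [hsplit, Finset.sum_add_distrib, Finset.sum_ite_eq', Finset.mem_range, hi, if_true]
  congr 2
  · split_ifs with h
    · rfl
    · rw [show (i : ℕ) = L by omega, hF]
  · rcases hil : (i : ℕ) with _ | l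
    · simp [delay]
    · simp [delay, show l < L + 1 by omega]

lemma mul_tridiag_apply {L : ℕ} (a d c : ℕ → ℂ) {G : ℕ → ℕ → ℂ} (i j : Fin (L + 1))
    (hG : G i (L + 1) * c L = 0) :
    ((Matrix.of fun i j : Fin (L + 1) => G i j) * tridiag L a d c) i j =
      delay (fun l => G i l * a l) j + G i j * d j + G i (j + 1) * c j := by
  have htranspose : (Matrix.of fun i j : Fin (L + 1) => G i j) * tridiag L a d c =
      (tridiag L c d a * Matrix.of fun k l : Fin (L + 1) => G l k)ᵀ := by
    rw [Matrix.transpose_mul, transpose_tridiag]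
    rfl
  rw [htranspose, Matrix.transpose_apply,
    tridiag_mul_apply c d a (F := fun k l => G l k) j i (by rwa [mul_comm])]
  simp only [mul_comm]
  ring

lemma tridiag_submatrix_rev {L : ℕ} {a d c a' d' c' : ℕ → ℂ}
    (hac : ∀ i j, i + j + 1 = L → a i = c' j) (hd : ∀ i j, i + j = L → d i = d' j)
    (hca : ∀ i j, i + j + 1 = L → c i = a' j) :
    (tridiag L a d c).submatrix Fin.rev Fin.rev = tridiag L a' d' c' := by
  ext i j
  simp only [tridiag, Matrix.submatrix_apply, Matrix.of_apply, Fin.val_rev]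
  split_ifs
  all_goals first
    | rfl
    | omega
    | exact hac _ _ (by omega)
    | exact hd _ _ (by omega)
    | exact hca _ _ (by omega)

lemma Jm_mul_mul_Jm (L : ℕ) (M : Matrix (Fin (L + 1)) (Fin (L + 1)) ℂ) :
    Jm L * M * Jm L = M.submatrix Fin.rev Fin.rev := by
  have hJ : Jm L = (Fin.revPerm (n := L + 1)).toPEquiv.toMatrix := by
    ext i j
    simp only [Jm, Matrix.of_apply, PEquiv.toMatrix_apply, Equiv.toPEquiv_apply, Fin.revPerm_apply,
      Option.mem_some_iff, Fin.ext_iff, Fin.val_rev]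
    exact if_congr (by omega) rfl rfl
  rw [hJ, PEquiv.toMatrix_toPEquiv_mul, PEquiv.mul_toMatrix_toPEquiv]
  rfl

/-! ### The matrix identities -/

/-- The common factor of the entries of `M₁(z)` and `M₂(z)`. -/
def scaleFactor (q z : ℂ) : ℂ :=
  q / (1 - q ^ 2) ^ 2 / (1 - z ^ 2)

/-- The upper unipotent left factor of `P_n` at `(z + z⁻¹) / 2`. -/
def unipMatrix (q : ℂ) (L : ℕ) (z : ℂ) : Matrix (Fin (L + 1)) (Fin (L + 1)) ℂ :=
  Matrix.of fun i k => unipEntry q i k z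

/-- The right factor of `P_n` at `(z + z⁻¹) / 2`. -/
def rightMatrix (q : ℂ) (L n : ℕ) (z : ℂ) : Matrix (Fin (L + 1)) (Fin (L + 1)) ℂ :=
  Matrix.of fun k j => rightEntry q L (n + j) j k z

/-- The tridiagonal matrix `U(z)⁻¹ M₂(z) U(qz)`, where `U` is the unipotent factor of `P_n`. -/
def conjM2 (q : ℂ) (L : ℕ) (z : ℂ) : Matrix (Fin (L + 1)) (Fin (L + 1)) ℂ :=
  scaleFactor q z •
    tridiag L (conjUpper q (q ^ L) z) (conjDiag q (q ^ L) z) (secondLower q (q ^ L) z)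

section Matrices

variable {q : ℂ}

lemma scaleFactor_inv (q : ℂ) {z : ℂ} (hz : z ≠ 0) :
    scaleFactor q z⁻¹ = -(z ^ 2 * scaleFactor q z) := by
  have hden : 1 - z⁻¹ ^ 2 = -(1 - z ^ 2) / z ^ 2 := by
    field_simp
    ring
  rw [scaleFactor, scaleFactor, hden, neg_div, div_neg, div_div_eq_mul_div]
  ring

lemma scaleFactor_mul_one_sub_sq (q : ℂ) {z : ℂ} (hz : 1 - z ^ 2 ≠ 0) :
    scaleFactor q z * (1 - z ^ 2) = q / (1 - q ^ 2) ^ 2 := by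
  rw [scaleFactor, div_mul_cancel₀ _ hz]

lemma M1f_eq_smul_tridiag (hq : q ≠ 0) (L : ℕ) (z : ℂ) :
    M1f q L z = scaleFactor q z • tridiag L (fun i => -((1 - q ^ 2 * (q ^ i) ^ 2) * z / q ^ i))
      (fun i => (1 - q ^ 2 * (q ^ i) ^ 2 * z ^ 2) / q ^ i) 0 := by
  ext i j
  simp only [M1f, tridiag, scaleFactor, Matrix.of_apply, Matrix.smul_apply, smul_eq_mul,
    zpow_one_sub_natCast₀ hq, Pi.zero_apply, ite_self, mul_ite, mul_zero,
    show q ^ (2 * (i : ℕ) + 2) = q ^ 2 * (q ^ (i : ℕ)) ^ 2 by ring]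
  split_ifs
  · ring
  · ring
  · rfl

lemma K1f_eq_smul_diagonal (hq : q ≠ 0) (L : ℕ) (z : ℂ) :
    K1f q L z = scaleFactor q z • Matrix.diagonal fun i : Fin (L + 1) =>
      (1 - q ^ 2 * (q ^ (i : ℕ)) ^ 2 * z ^ 2) / q ^ (i : ℕ) := by
  rw [K1f, ← Matrix.diagonal_smul]
  congr 1
  funext i
  rw [zpow_one_sub_natCast₀ hq, Pi.smul_apply, smul_eq_mul, scaleFactor]
  ring

lemma M2f_eq_smul_tridiag (hq : q ≠ 0) (L : ℕ) (z : ℂ) :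
    M2f q L z =
      scaleFactor q z • tridiag L 0 (secondDiag q (q ^ L) z) (secondLower q (q ^ L) z) := by
  rw [M2f, Jm_mul_mul_Jm, M1f_eq_smul_tridiag hq, Matrix.submatrix_smul, Pi.smul_apply,
    Pi.smul_apply, tridiag_submatrix_rev]
  · rintro i j rfl
    rw [secondLower]
    field_simp
    ring
  · rintro i j rfl
    rw [secondDiag]
    field_simp
    ring
  · exact fun _ _ _ => rfl

lemma unipMatrix_inv (q : ℂ) (L : ℕ) (z : ℂ) : unipMatrix q L z⁻¹ = unipMatrix q L z := by
  simp only [unipMatrix, unipEntry_inv]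

lemma unipMatrix_mul_inv (q : ℂ) (L : ℕ) (z : ℂ) :
    unipMatrix q L (q * z⁻¹) = unipMatrix q L (q⁻¹ * z) := by
  rw [← unipMatrix_inv, mul_inv, inv_inv]

lemma M1f_mul_unipMatrix (hq : IsGeneric q) (L : ℕ) {z : ℂ} (hz : z ≠ 0) :
    M1f q L z * unipMatrix q L (q * z) = unipMatrix q L z * K1f q L z := by
  rw [M1f_eq_smul_tridiag hq.ne_zero, K1f_eq_smul_diagonal hq.ne_zero, Matrix.smul_mul,
    Matrix.mul_smul]
  congr 1
  ext i k
  rw [unipMatrix, tridiag_mul_apply _ _ _ (F := fun i k => unipEntry q i k (q * z)) i k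
    (by rw [unipEntry_of_lt q k.is_lt, mul_zero]), Matrix.mul_diagonal, unipMatrix, Matrix.of_apply,
    show delay (fun l => (0 : ℕ → ℂ) l * unipEntry q l k (q * z)) i = 0 by
      rcases (i : ℕ) with _ | _ <;> simp [delay], add_zero, mul_comm (unipEntry q i k z)]
  exact unipEntry_intertwine_left hq i k hz

lemma M2f_mul_unipMatrix (hq : IsGeneric q) (L : ℕ) {z : ℂ} (hz : z ≠ 0) :
    M2f q L z * unipMatrix q L (q * z) = unipMatrix q L z * conjM2 q L z := by
  have hlast : secondLower q (q ^ L) z L = 0 := by simp [secondLower]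
  rw [M2f_eq_smul_tridiag hq.ne_zero, conjM2, Matrix.smul_mul, Matrix.mul_smul]
  congr 1
  ext i k
  rw [unipMatrix, unipMatrix,
    tridiag_mul_apply _ _ _ (F := fun i k => unipEntry q i k (q * z)) i k (by simp),
    mul_tridiag_apply _ _ _ (G := fun i k => unipEntry q i k z) i k (by rw [hlast, mul_zero])]
  simpa using unipEntry_intertwine_right hq (hq.pow_ne_zero L) hz i k

lemma Lam1_eq_smul_diagonal (hq : IsGeneric q) (L n : ℕ) :
    Lam1 q L n = (q / (1 - q ^ 2) ^ 2) • Matrix.diagonal fun j : Fin (L + 1) =>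
      (1 + q ^ 2 * (q ^ (n + (j : ℕ))) ^ 2) / q ^ (n + (j : ℕ)) := by
  have hq0 := hq.ne_zero
  have hd : 1 - q ^ 2 ≠ 0 := hq.one_sub_pow_ne_zero two_ne_zero
  rw [Lam1, ← Matrix.diagonal_smul]
  congr 1
  funext j
  have hup : ((j : ℕ) : ℤ) + n + 1 = ((n + j + 1 : ℕ) : ℤ) := by
    push_cast
    ring
  have hdown : -((j : ℕ) : ℤ) - n - 1 = -((n + j + 1 : ℕ) : ℤ) := by
    push_cast
    ring
  have hden : q⁻¹ - q = (1 - q ^ 2) / q := by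
    field_simp
  rw [hup, hdown, _root_.zpow_neg, zpow_natCast, pow_succ, hden, Pi.smul_apply, smul_eq_mul]
  generalize 1 - q ^ 2 = d at *
  field_simp

lemma Lam2_eq_smul_diagonal (hq : IsGeneric q) (L n : ℕ) :
    Lam2 q L n = (q / (1 - q ^ 2) ^ 2) • Matrix.diagonal fun j : Fin (L + 1) =>
      ((q ^ (j : ℕ)) ^ 2 + q ^ 2 * (q ^ L) ^ 2 * (q ^ (n + (j : ℕ))) ^ 2 / (q ^ (j : ℕ)) ^ 2) /
        (q ^ L * q ^ (n + (j : ℕ))) := by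
  have hq0 := hq.ne_zero
  rw [Lam2, Jm_mul_mul_Jm, Lam1_eq_smul_diagonal hq, Matrix.submatrix_smul, Pi.smul_apply,
    Pi.smul_apply, Matrix.submatrix_diagonal _ _ Fin.rev_injective]
  congr 2
  funext j
  obtain ⟨i, hi⟩ := Nat.exists_eq_add_of_le (Nat.lt_succ_iff.1 j.is_lt)
  have hL : q ^ L = q ^ (j : ℕ) * q ^ i := by
    rw [← pow_add, ← hi]
  rw [Function.comp_apply, Fin.val_rev, show L + 1 - ((j : ℕ) + 1) = i by omega, hL, pow_add,
    pow_add]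
  field_simp

lemma K1f_mul_rightMatrix (hq : IsGeneric q) (L n : ℕ) {z : ℂ} (hz0 : z ≠ 0)
    (hz : 1 - z ^ 2 ≠ 0) :
    K1f q L z * rightMatrix q L n (q * z) + K1f q L z⁻¹ * rightMatrix q L n (q⁻¹ * z) =
      rightMatrix q L n z * Lam1 q L n := by
  ext k j
  have haw := colEntry_askeyWilson hq L (n + j) k hz0
  have hk := hq.pow_ne_zero k
  have hm := hq.pow_ne_zero (n + j)
  have hscale := scaleFactor_mul_one_sub_sq q hz
  rw [K1f_eq_smul_diagonal hq.ne_zero, K1f_eq_smul_diagonal hq.ne_zero, scaleFactor_inv q hz0,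
    Lam1_eq_smul_diagonal hq]
  simp only [Matrix.add_apply, Matrix.smul_mul, Matrix.mul_smul, Matrix.smul_apply,
    Matrix.diagonal_mul, Matrix.mul_diagonal, smul_eq_mul, rightMatrix, Matrix.of_apply, rightEntry,
    ← hscale]
  linear_combination (norm := (field_simp; ring))
    scaleFactor q z * racahSeq q L (n + j) j k / (q ^ (k : ℕ) * q ^ (n + j : ℕ)) * haw

lemma conjM2_mul_rightMatrix_apply (hq : IsGeneric q) (L n : ℕ) (z w : ℂ) (k j : Fin (L + 1)) :
    (conjM2 q L z * rightMatrix q L n w) k j =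
      scaleFactor q z * conjRow q (q ^ L) z (fun l => rightEntry q L (n + j) j l w) k := by
  have hlast : rightEntry q L (n + j) j (L + 1) w = 0 := by
    simp [rightEntry, colEntry, colHead_of_lt hq L.lt_succ_self]
  rw [conjM2, rightMatrix, Matrix.smul_mul, Matrix.smul_apply, smul_eq_mul,
    tridiag_mul_apply _ _ _ (F := fun k j => rightEntry q L (n + j) j k w) k j
      (by rw [hlast, mul_zero]), conjRow]

lemma conjM2_mul_rightMatrix (hq : IsGeneric q) (L n : ℕ) {z : ℂ} (hz0 : z ≠ 0)
    (hz : 1 - z ^ 2 ≠ 0) :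
    conjM2 q L z * rightMatrix q L n (q * z) + conjM2 q L z⁻¹ * rightMatrix q L n (q⁻¹ * z) =
      rightMatrix q L n z * Lam2 q L n := by
  ext k j
  rw [Matrix.add_apply, conjM2_mul_rightMatrix_apply hq, conjM2_mul_rightMatrix_apply hq,
    scaleFactor_inv q hz0, Lam2_eq_smul_diagonal hq, Matrix.mul_smul, Matrix.smul_apply,
    Matrix.mul_diagonal, smul_eq_mul, rightMatrix, Matrix.of_apply,
    ← scaleFactor_mul_one_sub_sq q hz]
  linear_combination scaleFactor q z *
    conjRow_rightEntry hq (Nat.lt_succ_iff.1 j.is_lt) (Nat.le_add_left (j : ℕ) n) k hz0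

lemma zpow_neg_two_mul (q : ℂ) (a : ℕ) : q ^ (-(2 * (a : ℤ))) = ((q ^ a) ^ 2)⁻¹ := by
  rw [_root_.zpow_neg, ← pow_mul, mul_comm a, ← zpow_natCast]
  push_cast
  rfl

lemma unipEntry_mul_rightEntry (hq : q ≠ 0) (L n : ℕ) {i j k : ℕ} (hik : i ≤ k) (hk : k ≤ n + j)
    (z : ℂ) :
    unipEntry q i k z * rightEntry q L (n + j) j k z =
      (-1) ^ k * q ^ ((n : ℤ) + (2 * (k : ℤ) + 1) * ((k : ℤ) - (i : ℤ)) +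
            (j : ℤ) * (2 * (k : ℤ) + 1) + 2 * (k : ℤ) * ((L : ℤ) + (n : ℤ) + 1) - (k : ℤ) ^ 2) *
          (qp (q ^ 2) (q ^ 2) k * qp (q ^ 2) (q ^ 2) (k + i) /
            (qp (q ^ 2) (q ^ 2) (2 * k) * qp (q ^ 2) (q ^ 2) i)) *
          (qp (q ^ (-(2 * (L : ℤ)))) (q ^ 2) k * qp (q ^ (-(2 * (j : ℤ) + 2 * (n : ℤ)))) (q ^ 2) k /
            (qp (q ^ 2) (q ^ 2) k * qp (q ^ (2 * (L : ℤ) + 4)) (q ^ 2) k)) *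
          (qp (q ^ 2) (q ^ 2) (n + j - k) / qp (q ^ (4 * (k : ℤ) + 4)) (q ^ 2) (n + j - k)) *
          qRacah (q ^ 2) 1 1 (q ^ (-(2 * (n : ℤ) + 2 * (j : ℤ) + 2)))
            (q ^ (-(2 * (L : ℤ) + 2))) k j *
        (Chat (q ^ 2) (q ^ (-(2 * (k : ℤ)))) (k - i) z *
          Chat (q ^ 2) (q ^ (2 * (k : ℤ) + 2)) (n + j - k) z) := by
  have hexp : q ^ ((n : ℤ) + (2 * (k : ℤ) + 1) * ((k : ℤ) - (i : ℤ)) +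
        (j : ℤ) * (2 * (k : ℤ) + 1) + 2 * (k : ℤ) * ((L : ℤ) + (n : ℤ) + 1) - (k : ℤ) ^ 2) =
      q ^ ((2 * (k : ℤ) + 1) * ((k : ℤ) - (i : ℤ))) *
        q ^ (((n + j : ℕ) : ℤ) * (2 * k + 1) + 2 * k * ((L : ℤ) + 1) - (k : ℤ) ^ 2) := by
    rw [← zpow_add₀ hq]
    push_cast
    ring_nf
  have hm : q ^ (-(2 * (j : ℤ) + 2 * (n : ℤ))) = ((q ^ (n + j)) ^ 2)⁻¹ := by
    rw [← zpow_neg_two_mul]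
    push_cast
    ring_nf
  have hγ : -(2 * (n : ℤ) + 2 * (j : ℤ) + 2) = -(2 * ((n + j : ℕ) : ℤ) + 2) := by
    push_cast
    ring
  have hβ : q ^ (2 * (k : ℤ) + 2) = q ^ 2 * (q ^ k) ^ 2 := by
    rw [← pow_mul, ← pow_add, ← zpow_natCast]
    push_cast
    ring_nf
  have hL : q ^ (2 * (L : ℤ) + 4) = q ^ (2 * L + 4) := by exact_mod_cast zpow_natCast q (2 * L + 4)
  have hk4 : q ^ (4 * (k : ℤ) + 4) = q ^ (4 * k + 4) := by exact_mod_cast zpow_natCast q (4 * k + 4)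
  rw [unipEntry, if_pos hik, rightEntry, colEntry, if_pos hk, unipCoeff, colHead, colTail, racahSeq,
    hexp, hm, hγ, hβ, hL, hk4, zpow_neg_two_mul, zpow_neg_two_mul]
  ring

lemma evP_eq_unipMatrix_mul_rightMatrix (hq : q ≠ 0) {C : ℂ → ℂ → ℕ → Polynomial ℂ}
    (hC : IsUltra C) (L n : ℕ) {z : ℂ} (hz : z ≠ 0) :
    evP q L C n ((z + z⁻¹) / 2) = unipMatrix q L z * rightMatrix q L n z := by
  have heval (p β : ℂ) (N : ℕ) : (C p β N).eval ((z + z⁻¹) / 2) = Chat p β N z := (hC p β N).2 z hz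
  ext i j
  rw [evP, Matrix.map_apply, Pm, Matrix.of_apply, Polynomial.eval_finsetSum, Matrix.mul_apply]
  simp only [unipMatrix, rightMatrix, Matrix.of_apply]
  rw [Fin.sum_univ_eq_sum_range fun k => unipEntry q i k z * rightEntry q L (n + j) j k z,
    ← Finset.sum_subset (s₁ := Finset.Icc (i : ℕ) (min L (n + j))) (s₂ := Finset.range (L + 1))]
  · refine Finset.sum_congr rfl fun k hk => ?_
    rw [Finset.mem_Icc] at hk
    rw [Polynomial.eval_mul, Polynomial.eval_mul, Polynomial.eval_C, heval, heval,
      unipEntry_mul_rightEntry hq L n hk.1 (hk.2.trans (min_le_right _ _))]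
  · intro k hk
    rw [Finset.mem_Icc] at hk
    rw [Finset.mem_range]
    omega
  · intro k hk hk'
    rw [Finset.mem_range] at hk
    rw [Finset.mem_Icc] at hk'
    rcases lt_or_ge k i with hki | hik
    · rw [unipEntry_of_lt q hki, zero_mul]
    · rw [rightEntry, colEntry_of_lt q L (by omega), mul_zero, mul_zero]

lemma evP_difference_equation (hq : q ≠ 0) {C : ℂ → ℂ → ℕ → Polynomial ℂ} (hC : IsUltra C)
    {L n : ℕ} {M K : ℂ → Matrix (Fin (L + 1)) (Fin (L + 1)) ℂ}
    {Λ : Matrix (Fin (L + 1)) (Fin (L + 1)) ℂ} {z : ℂ} (hz : z ≠ 0)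
    (hMK : ∀ w ≠ 0, M w * unipMatrix q L (q * w) = unipMatrix q L w * K w)
    (hKΛ : K z * rightMatrix q L n (q * z) + K z⁻¹ * rightMatrix q L n (q⁻¹ * z) =
      rightMatrix q L n z * Λ) :
    M z * evP q L C n ((q * z + (q * z)⁻¹) / 2) +
        M z⁻¹ * evP q L C n ((q⁻¹ * z + (q⁻¹ * z)⁻¹) / 2) =
      evP q L C n ((z + z⁻¹) / 2) * Λ := by
  have hMK' : M z⁻¹ * unipMatrix q L (q⁻¹ * z) = unipMatrix q L z * K z⁻¹ := by
    rw [← unipMatrix_mul_inv, hMK _ (inv_ne_zero hz), unipMatrix_inv]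
  rw [evP_eq_unipMatrix_mul_rightMatrix hq hC L n (mul_ne_zero hq hz),
    evP_eq_unipMatrix_mul_rightMatrix hq hC L n (mul_ne_zero (inv_ne_zero hq) hz),
    evP_eq_unipMatrix_mul_rightMatrix hq hC L n hz, ← mul_assoc, ← mul_assoc, hMK z hz, hMK',
    mul_assoc, mul_assoc, ← mul_add, hKΛ, ← mul_assoc]

end Matrices

theorem stmt5_general {q : ℂ} (hq : IsGeneric q) (L : ℕ) {C : ℂ → ℂ → ℕ → Polynomial ℂ}
    (hC : IsUltra C) (n : ℕ) {z : ℂ} (hz0 : z ≠ 0) (hz1 : z ≠ 1) (hz2 : z ≠ -1) :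
    (M1f q L z * evP q L C n ((q * z + (q * z)⁻¹) / 2) +
        M1f q L z⁻¹ * evP q L C n ((q⁻¹ * z + (q⁻¹ * z)⁻¹) / 2) =
      evP q L C n ((z + z⁻¹) / 2) * Lam1 q L n) ∧
    (M2f q L z * evP q L C n ((q * z + (q * z)⁻¹) / 2) +
        M2f q L z⁻¹ * evP q L C n ((q⁻¹ * z + (q⁻¹ * z)⁻¹) / 2) =
      evP q L C n ((z + z⁻¹) / 2) * Lam2 q L n) := by
  have hz : 1 - z ^ 2 ≠ 0 := sub_ne_zero.2 (sq_ne_one_iff.2 ⟨hz1, hz2⟩).symm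
  constructor
  · exact evP_difference_equation hq.ne_zero hC hz0 (fun _ hw => M1f_mul_unipMatrix hq L hw)
      (K1f_mul_rightMatrix hq L n hz0 hz)
  · exact evP_difference_equation hq.ne_zero hC hz0 (fun _ hw => M2f_mul_unipMatrix hq L hw)
      (conjM2_mul_rightMatrix hq L n hz0 hz)

/-- the matrix-valued Askey–Wilson type q-difference equations
`M_i(z) P_n(μ(qz)) + M_i(z⁻¹) P_n(μ(q⁻¹z)) = P_n(μ(z)) Λ_n(i)` for `i = 1, 2`. -/
theorem stmt5 (q : ℝ) (hq0 : 0 < q) (hq1 : q < 1) (L : ℕ)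
    (C : ℂ → ℂ → ℕ → Polynomial ℂ) (hC : IsUltra C) (n : ℕ)
    (z : ℂ) (hz0 : z ≠ 0) (hz1 : z ≠ 1) (hz2 : z ≠ -1) :
    (M1f (q : ℂ) L z * evP (q : ℂ) L C n (((q : ℂ) * z + ((q : ℂ) * z)⁻¹) / 2) +
        M1f (q : ℂ) L z⁻¹ *
          evP (q : ℂ) L C n (((q : ℂ)⁻¹ * z + ((q : ℂ)⁻¹ * z)⁻¹) / 2) =
      evP (q : ℂ) L C n ((z + z⁻¹) / 2) * Lam1 (q : ℂ) L n) ∧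
    (M2f (q : ℂ) L z * evP (q : ℂ) L C n (((q : ℂ) * z + ((q : ℂ) * z)⁻¹) / 2) +
        M2f (q : ℂ) L z⁻¹ *
          evP (q : ℂ) L C n (((q : ℂ)⁻¹ * z + ((q : ℂ)⁻¹ * z)⁻¹) / 2) =
      evP (q : ℂ) L C n ((z + z⁻¹) / 2) * Lam2 (q : ℂ) L n) := by
  exact stmt5_general (isGeneric_ofReal hq0 hq1) L hC n hz0 hz1 hz2

end
end

section
/- Define the (2ℓ+1)×(2ℓ+1) matrix-valued polynomial M(x) by M(x)_{k,n} = q^{(2k+1)(k-n)} (q²;q²)_k (q²;q²)_{k+n} / ((q²;q²)_{2k}(q²;q²)_n) · C_{k-n}(x;q^{-2k}|q²) for 0 ≤ n ≤ k ≤ 2ℓ and M(x)_{k,n} = 0 for n > k. Then M(x) is the inverse of L(x): L(x)·M(x) = I for every x. -/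
open Finset Polynomial MeasureTheory Matrix
open scoped BigOperators ComplexOrder

noncomputable section

/-!
It suffices to show `M(x) L(x) = I`, since a left inverse of a square matrix is a right inverse.
Write `p = q²` and `x = (z + z⁻¹) / 2`, let `G_β(t) = ∑ C_j(x;β|p) t^j` and
`H_n(t) = (zt, z⁻¹t; p)_n`. The `q`-binomial theorem gives `H_n G_{p^n} = 1` and
`H_n(t) = G_{p^{-n}}(p^n t)`. By the latter, an entry of `M(x) L(x)` strictly below the diagonal
is, up to a constant, the coefficient of `t^(m+1)` in
`H_{n+m}(t) · ∑ (p^(2n+j);p)_m C_j(x;p^n|p) t^j` for some `n` and `m`. This product is a polynomial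
of degree at most `m` in `t`: it is `1` for `m = 0`, and it satisfies a recursion in `m` in which
the coefficients of `t^(m+2)` cancel.
-/

section QShiftedFactorial

lemma qp_add (a p : ℂ) (m n : ℕ) : qp a p (m + n) = qp a p m * qp (a * p ^ m) p n := by
  simp only [qp, Finset.prod_range_add, pow_add, mul_assoc]

lemma qp_self_ne_zero {p : ℂ} (hp : ¬IsOfFinOrder p) (n : ℕ) : qp p p n ≠ 0 := by
  refine Finset.prod_ne_zero_iff.mpr fun j _ h => hp ?_
  rw [← pow_succ', sub_eq_zero] at h
  exact isOfFinOrder_iff_pow_eq_one.mpr ⟨j + 1, j.succ_pos, h.symm⟩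

/-- The coefficientwise twist `∑ f_j t^j ↦ ∑ (a p^j; p)_m f_j t^j` of a power series. -/
def qpTwist (a p : ℂ) (m : ℕ) (f : PowerSeries ℂ) : PowerSeries ℂ :=
  PowerSeries.mk fun j => qp (a * p ^ j) p m * PowerSeries.coeff j f

lemma qpTwist_zero (a p : ℂ) (f : PowerSeries ℂ) : qpTwist a p 0 f = f := by
  ext j
  simp [qpTwist, qp]

lemma qpTwist_succ (a p : ℂ) (m : ℕ) (f : PowerSeries ℂ) :
    qpTwist a p (m + 1) f =
      qpTwist a p m f - PowerSeries.C (a * p ^ m) * PowerSeries.rescale p (qpTwist a p m f) := by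
  ext j
  simp only [qpTwist, map_sub, PowerSeries.coeff_C_mul, PowerSeries.coeff_rescale,
    PowerSeries.coeff_mk, qp_succ]
  ring

end QShiftedFactorial

lemma rescale_one_sub_C_mul_X {R : Type*} [CommRing R] (a b : R) :
    PowerSeries.rescale a (1 - PowerSeries.C b * PowerSeries.X) =
      1 - PowerSeries.C (b * a) * PowerSeries.X := by
  have rescale_C : PowerSeries.rescale a (PowerSeries.C b) = PowerSeries.C b := by
    ext n
    cases n <;> simp [PowerSeries.coeff_C]
  simp only [map_sub, map_one, map_mul, rescale_C, PowerSeries.rescale_X, mul_assoc]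

section QBinomialSeries

/-- The `q`-binomial series `∑ (β;p)_n / (p;p)_n t^n`, that is `(βt;p)_∞ / (t;p)_∞`. -/
def qBinomialSeries (p β : ℂ) : PowerSeries ℂ :=
  PowerSeries.mk fun n => qp β p n / qp p p n

lemma qBinomialSeries_one (p : ℂ) : qBinomialSeries p 1 = 1 := by
  ext n
  cases n with
  | zero => simp [qBinomialSeries, qp]
  | succ n => simp [qBinomialSeries, qp_succ', PowerSeries.coeff_one]

lemma one_sub_mul_qBinomialSeries {p : ℂ} (hp : ¬IsOfFinOrder p) (β : ℂ) :
    (1 - PowerSeries.C β * PowerSeries.X) * qBinomialSeries p (β * p) = qBinomialSeries p β := by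
  ext n
  rw [sub_mul, one_mul, mul_assoc, map_sub, PowerSeries.coeff_C_mul]
  cases n with
  | zero => simp [qBinomialSeries, qp]
  | succ n =>
    have h₀ : qp p p n ≠ 0 := qp_self_ne_zero hp n
    have h₁ : 1 - p * p ^ n ≠ 0 := right_ne_zero_of_mul (qp_succ p p n ▸ qp_self_ne_zero hp (n + 1))
    simp only [PowerSeries.coeff_succ_X_mul, qBinomialSeries, PowerSeries.coeff_mk,
      qp_succ' β, qp_succ p, qp_succ (β * p)]
    field_simp
    ring

end QBinomialSeries

section UltraFactor

/-- The quadratic factor `(1 - ωzt)(1 - ωz⁻¹t) = 1 - 2xωt + ω²t²`, where `x = (z + z⁻¹) / 2`. -/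
def ultraFactor (z ω : ℂ) : PowerSeries ℂ :=
  (1 - PowerSeries.C (ω * z⁻¹) * PowerSeries.X) * (1 - PowerSeries.C (ω * z) * PowerSeries.X)

lemma rescale_ultraFactor (z a ω : ℂ) :
    PowerSeries.rescale a (ultraFactor z ω) = ultraFactor z (ω * a) := by
  simp only [ultraFactor, map_mul (PowerSeries.rescale a), rescale_one_sub_C_mul_X,
    mul_right_comm ω]

lemma coeff_ultraFactor_mul {z : ℂ} (hz : z ≠ 0) (ω : ℂ) (f : PowerSeries ℂ) (n : ℕ) :
    PowerSeries.coeff (n + 2) (ultraFactor z ω * f) =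
      PowerSeries.coeff (n + 2) f - ω * (z + z⁻¹) * PowerSeries.coeff (n + 1) f +
        ω ^ 2 * PowerSeries.coeff n f := by
  have hω : ω ^ 2 = ω * z⁻¹ * (ω * z) := by field_simp
  have expand : ultraFactor z ω = 1 - PowerSeries.C (ω * (z + z⁻¹)) * PowerSeries.X +
      PowerSeries.C (ω ^ 2) * PowerSeries.X ^ 2 := by
    simp only [hω, ultraFactor, map_mul, map_add]
    ring
  rw [expand, add_mul, sub_mul, one_mul, mul_assoc, mul_assoc, map_add, map_sub,
    PowerSeries.coeff_C_mul, PowerSeries.coeff_C_mul, PowerSeries.coeff_succ_X_mul,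
    PowerSeries.coeff_X_pow_mul]

lemma coeff_ultraFactor_mul_sub_eq_zero {z : ℂ} (hz : z ≠ 0) {p ω c : ℂ} {f : PowerSeries ℂ}
    {m : ℕ} (hf : ∀ k, m < k → PowerSeries.coeff k f = 0) (hω : ω ^ 2 = c * p ^ m)
    {k : ℕ} (hk : m + 1 < k) :
    PowerSeries.coeff k
      (ultraFactor z ω * f -
        PowerSeries.C c * (ultraFactor z 1 * PowerSeries.rescale p f)) = 0 := by
  obtain ⟨k, rfl⟩ := Nat.exists_eq_add_of_le' (show 2 ≤ k by omega)
  simp only [map_sub, PowerSeries.coeff_C_mul, coeff_ultraFactor_mul hz,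
    PowerSeries.coeff_rescale, hf (k + 2) (by omega), hf (k + 1) (by omega), hω]
  obtain rfl | hmk : m = k ∨ m < k := by omega
  · ring
  · simp [hf k hmk]

/-- The product `(zt, z⁻¹t; p)_n` as a power series in `t`. -/
def ultraPochhammer (p z : ℂ) (n : ℕ) : PowerSeries ℂ :=
  ∏ j ∈ Finset.range n, ultraFactor z (p ^ j)

lemma ultraPochhammer_zero (p z : ℂ) : ultraPochhammer p z 0 = 1 :=
  Finset.prod_range_zero _

lemma ultraPochhammer_succ (p z : ℂ) (n : ℕ) :
    ultraPochhammer p z (n + 1) = ultraPochhammer p z n * ultraFactor z (p ^ n) :=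
  Finset.prod_range_succ _ _

lemma ultraPochhammer_succ' (p z : ℂ) (n : ℕ) :
    ultraPochhammer p z (n + 1) =
      ultraFactor z 1 * PowerSeries.rescale p (ultraPochhammer p z n) := by
  simp only [ultraPochhammer, Finset.prod_range_succ', map_prod, rescale_ultraFactor, pow_zero,
    ← pow_succ]
  exact mul_comm _ _

end UltraFactor

section UltraSeries

/-- The generating function `∑ C_n(x;β|p) t^n = (βzt, βz⁻¹t; p)_∞ / (zt, z⁻¹t; p)_∞` of the
continuous `q`-ultraspherical polynomials at `x = (z + z⁻¹) / 2`, as a product of two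
`q`-binomial series. -/
def ultraSeries (p z β : ℂ) : PowerSeries ℂ :=
  PowerSeries.rescale z⁻¹ (qBinomialSeries p β) * PowerSeries.rescale z (qBinomialSeries p β)

lemma IsUltra.eval_eq_coeff_ultraSeries {C : ℂ → ℂ → ℕ → Polynomial ℂ} (hC : IsUltra C)
    (p β : ℂ) {z : ℂ} (hz : z ≠ 0) (n : ℕ) :
    (C p β n).eval ((z + z⁻¹) / 2) = PowerSeries.coeff n (ultraSeries p z β) := by
  rw [(hC p β n).2 z hz, ultraSeries, PowerSeries.coeff_mul,
    Finset.Nat.sum_antidiagonal_eq_sum_range_succ_mk]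
  refine Finset.sum_congr rfl fun r hr => ?_
  have hrn : r ≤ n := Nat.lt_succ_iff.mp (Finset.mem_range.mp hr)
  have hpow : z ^ ((n : ℤ) - 2 * r) = z⁻¹ ^ r * z ^ (n - r) := by
    rw [← zpow_natCast, ← zpow_natCast, _root_.inv_zpow', ← zpow_add₀ hz]
    congr 1
    omega
  simp only [PowerSeries.coeff_rescale, qBinomialSeries, PowerSeries.coeff_mk, hpow]
  ring

lemma exists_eq_half_add_inv (x : ℂ) : ∃ z : ℂ, z ≠ 0 ∧ x = (z + z⁻¹) / 2 := by
  obtain ⟨w, rfl⟩ := Complex.cos_surjective x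
  refine ⟨Complex.exp (w * Complex.I), Complex.exp_ne_zero _, ?_⟩
  rw [Complex.cos, ← Complex.exp_neg, neg_mul]

lemma IsUltra.eval_zero {C : ℂ → ℂ → ℕ → Polynomial ℂ} (hC : IsUltra C) (p β x : ℂ) :
    (C p β 0).eval x = 1 := by
  obtain ⟨z, hz, rfl⟩ := exists_eq_half_add_inv x
  simp [(hC p β 0).2 z hz, qp]

lemma ultraSeries_one (p z : ℂ) : ultraSeries p z 1 = 1 := by
  simp [ultraSeries, qBinomialSeries_one]

variable {p : ℂ}

lemma ultraFactor_mul_ultraSeries (hp : ¬IsOfFinOrder p) (z β : ℂ) :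
    ultraFactor z β * ultraSeries p z (β * p) = ultraSeries p z β := by
  simp only [ultraSeries, ultraFactor, ← one_sub_mul_qBinomialSeries hp β,
    map_mul (PowerSeries.rescale _), rescale_one_sub_C_mul_X]
  ring

lemma ultraPochhammer_mul_ultraSeries (hp : ¬IsOfFinOrder p) (z : ℂ) (n : ℕ) :
    ultraPochhammer p z n * ultraSeries p z (p ^ n) = 1 := by
  induction n with
  | zero => simp [ultraPochhammer_zero, ultraSeries_one]
  | succ n ih =>
    rw [ultraPochhammer_succ, mul_assoc, pow_succ, ultraFactor_mul_ultraSeries hp, ih]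

lemma ultraPochhammer_eq_rescale_ultraSeries (hp₀ : p ≠ 0) (hp : ¬IsOfFinOrder p) (z : ℂ)
    (n : ℕ) :
    ultraPochhammer p z n = PowerSeries.rescale (p ^ n) (ultraSeries p z (p ^ n)⁻¹) := by
  induction n with
  | zero => simp [ultraPochhammer_zero, ultraSeries_one]
  | succ n ih =>
    have hinv : (p ^ (n + 1))⁻¹ * p = (p ^ n)⁻¹ := by
      rw [pow_succ, mul_inv, inv_mul_cancel_right₀ hp₀]
    have hcancel : (p ^ (n + 1))⁻¹ * p ^ (n + 1) = 1 := inv_mul_cancel₀ (pow_ne_zero _ hp₀)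
    rw [ultraPochhammer_succ', ih, ← ultraFactor_mul_ultraSeries hp z (p ^ (n + 1))⁻¹,
      map_mul (PowerSeries.rescale _), rescale_ultraFactor, hinv, hcancel,
      PowerSeries.rescale_rescale, ← pow_succ]

/-- The product `(zt, z⁻¹t; p)_{n+m} · ∑ (p^(2n+j);p)_m C_j(x;p^n|p) t^j`, a polynomial of degree
at most `m` in `t` whose coefficient of `t^(m+1)` is an off-diagonal entry of `M(x) L(x)`, up to
normalization. -/
def twistedProduct (p z : ℂ) (n m : ℕ) : PowerSeries ℂ :=
  qpTwist ((p ^ n) ^ 2) p m (ultraSeries p z (p ^ n)) * ultraPochhammer p z (n + m)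

lemma twistedProduct_zero (hp : ¬IsOfFinOrder p) (z : ℂ) (n : ℕ) :
    twistedProduct p z n 0 = 1 := by
  rw [twistedProduct, qpTwist_zero, add_zero, mul_comm, ultraPochhammer_mul_ultraSeries hp]

lemma twistedProduct_succ (p z : ℂ) (n m : ℕ) :
    twistedProduct p z n (m + 1) =
      ultraFactor z (p ^ (n + m)) * twistedProduct p z n m -
        PowerSeries.C ((p ^ n) ^ 2 * p ^ m) *
          (ultraFactor z 1 * PowerSeries.rescale p (twistedProduct p z n m)) := by
  simp only [twistedProduct, map_mul (PowerSeries.rescale p)]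
  rw [qpTwist_succ, sub_mul, ← add_assoc]
  congr 1
  · rw [ultraPochhammer_succ]
    ring
  · rw [ultraPochhammer_succ']
    ring

lemma coeff_twistedProduct_eq_zero (hp : ¬IsOfFinOrder p) {z : ℂ} (hz : z ≠ 0) (n : ℕ) {m k : ℕ}
    (hk : m < k) : PowerSeries.coeff k (twistedProduct p z n m) = 0 := by
  induction m generalizing k with
  | zero => rw [twistedProduct_zero hp, PowerSeries.coeff_one, if_neg hk.ne']
  | succ m ih =>
    rw [twistedProduct_succ]
    exact coeff_ultraFactor_mul_sub_eq_zero hz (fun _ => ih) (by ring) hk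

lemma IsUltra.sum_antidiagonal_eq_zero {C : ℂ → ℂ → ℕ → Polynomial ℂ} (hC : IsUltra C)
    (hp₀ : p ≠ 0) (hp : ¬IsOfFinOrder p) (n m : ℕ) (x : ℂ) :
    ∑ ij ∈ HasAntidiagonal.antidiagonal (m + 1),
      qp ((p ^ n) ^ 2 * p ^ ij.1) p m * (p ^ (n + m)) ^ ij.2 *
        ((C p (p ^ n) ij.1).eval x * (C p (p ^ (n + m))⁻¹ ij.2).eval x) = 0 := by
  obtain ⟨z, hz, rfl⟩ := exists_eq_half_add_inv x
  have h := coeff_twistedProduct_eq_zero hp hz n m.lt_succ_self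
  rw [twistedProduct, ultraPochhammer_eq_rescale_ultraSeries hp₀ hp, PowerSeries.coeff_mul] at h
  simp only [qpTwist, PowerSeries.coeff_mk, PowerSeries.coeff_rescale] at h
  simpa only [hC.eval_eq_coeff_ultraSeries _ _ hz, mul_mul_mul_comm] using h

end UltraSeries

section LowerTriangular

variable {R : Type*}

/-- The lower triangular `N × N` matrix with entries `a i j` for `j ≤ i`. -/
def lowerTriangular [Zero R] (N : ℕ) (a : ℕ → ℕ → R) : Matrix (Fin N) (Fin N) R :=
  Matrix.of fun i j => if (j : ℕ) ≤ (i : ℕ) then a i j else 0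

lemma lowerTriangular_mul_apply [NonUnitalNonAssocSemiring R] {N : ℕ} (a b : ℕ → ℕ → R)
    (i j : Fin N) :
    (lowerTriangular N a * lowerTriangular N b) i j =
      ∑ k ∈ Finset.Icc (j : ℕ) i, a i k * b k j := by
  simp only [lowerTriangular, Matrix.mul_apply, Matrix.of_apply, ite_zero_mul_ite_zero]
  rw [Fin.sum_univ_eq_sum_range (fun k => if k ≤ (i : ℕ) ∧ (j : ℕ) ≤ k then a i k * b k j else 0) N,
    ← Finset.sum_filter]
  refine Finset.sum_congr ?_ fun _ _ => rfl
  ext k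
  simp only [Finset.mem_filter, Finset.mem_range, Finset.mem_Icc]
  omega

lemma sum_Icc_add_eq_sum_antidiagonal [AddCommMonoid R] (f : ℕ → R) (n m : ℕ) :
    ∑ k ∈ Finset.Icc n (n + m), f k = ∑ ij ∈ HasAntidiagonal.antidiagonal m, f (n + ij.1) := by
  rw [Finset.Nat.sum_antidiagonal_eq_sum_range_succ_mk, ← Finset.Ico_add_one_right_eq_Icc,
    Finset.sum_Ico_eq_sum_range]
  congr 2
  omega

lemma lowerTriangular_mul_eq_one [NonAssocSemiring R] (N : ℕ) {a b : ℕ → ℕ → R}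
    (hdiag : ∀ n, a n n * b n n = 1)
    (hoff : ∀ n m, ∑ ij ∈ HasAntidiagonal.antidiagonal (m + 1),
      a (n + (m + 1)) (n + ij.1) * b (n + ij.1) n = 0) :
    lowerTriangular N a * lowerTriangular N b = 1 := by
  ext i j
  rw [lowerTriangular_mul_apply, Matrix.one_apply]
  rcases lt_trichotomy i j with h | rfl | h
  · rw [Finset.Icc_eq_empty (by simpa using h), Finset.sum_empty, if_neg h.ne]
  · rw [Finset.Icc_self, Finset.sum_singleton, hdiag, if_pos rfl]
  · obtain ⟨m, hm⟩ := Nat.exists_eq_add_of_lt (show (j : ℕ) < i from h)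
    rw [if_neg h.ne', hm, add_assoc, sum_Icc_add_eq_sum_antidiagonal, hoff]

end LowerTriangular

section Inverse

/-- The normalization factor in front of the polynomial in the `(m, k)` entry of `L(x)`. -/
def lmCoeff (q : ℂ) (m k : ℕ) : ℂ :=
  q ^ ((m : ℤ) - (k : ℤ)) * qp (q ^ 2) (q ^ 2) m * qp (q ^ 2) (q ^ 2) (2 * k + 1) /
    (qp (q ^ 2) (q ^ 2) (m + k + 1) * qp (q ^ 2) (q ^ 2) k)

/-- The normalization factor in front of the polynomial in the `(k, n)` entry of `M(x)`. -/
def linvCoeff (q : ℂ) (k n : ℕ) : ℂ :=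
  q ^ ((2 * (k : ℤ) + 1) * ((k : ℤ) - (n : ℤ))) * qp (q ^ 2) (q ^ 2) k *
      qp (q ^ 2) (q ^ 2) (k + n) /
    (qp (q ^ 2) (q ^ 2) (2 * k) * qp (q ^ 2) (q ^ 2) n)

lemma Lm_eq_lowerTriangular (q : ℂ) (L : ℕ) (C : ℂ → ℂ → ℕ → Polynomial ℂ) (x : ℂ) :
    Lm q L C x = lowerTriangular (L + 1) fun m k =>
      lmCoeff q m k * (C (q ^ 2) (q ^ (2 * k + 2)) (m - k)).eval x :=
  rfl

lemma Linv_eq_lowerTriangular (q : ℂ) (L : ℕ) (C : ℂ → ℂ → ℕ → Polynomial ℂ) (x : ℂ) :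
    Linv q L C x = lowerTriangular (L + 1) fun k n =>
      linvCoeff q k n * (C (q ^ 2) (q ^ (-(2 * (k : ℤ)))) (k - n)).eval x :=
  rfl

variable {q : ℂ}

lemma lmCoeff_self (hq : ¬IsOfFinOrder (q ^ 2)) (n : ℕ) : lmCoeff q n n = 1 := by
  have h₁ := qp_self_ne_zero hq n
  have h₂ := qp_self_ne_zero hq (2 * n + 1)
  rw [lmCoeff, sub_self, zpow_zero, ← two_mul]
  field_simp

lemma linvCoeff_self (hq : ¬IsOfFinOrder (q ^ 2)) (n : ℕ) : linvCoeff q n n = 1 := by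
  have h₁ := qp_self_ne_zero hq n
  have h₂ := qp_self_ne_zero hq (2 * n)
  rw [linvCoeff, sub_self, mul_zero, zpow_zero, ← two_mul]
  field_simp

lemma zpow_two_mul_add_one_mul_sub (q : ℂ) {n m i j : ℕ} (hij : i + j = m) :
    q ^ ((2 * ((n + m : ℕ) : ℤ) + 1) * (((n + m : ℕ) : ℤ) - ((n + i : ℕ) : ℤ))) =
      ((q ^ 2) ^ (n + m)) ^ j * q ^ j := by
  rw [show ((n + m : ℕ) : ℤ) - ((n + i : ℕ) : ℤ) = (j : ℤ) by omega, ← pow_mul, ← pow_mul,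
    ← pow_add, ← zpow_natCast]
  congr 1
  push_cast
  ring

lemma zpow_add_sub_left (q : ℂ) (n i : ℕ) : q ^ (((n + i : ℕ) : ℤ) - (n : ℤ)) = q ^ i := by
  rw [Nat.cast_add, add_sub_cancel_left, zpow_natCast]

lemma qp_self_add (p : ℂ) (n m i : ℕ) :
    qp p p (n + (m + 1) + (n + i)) =
      qp p p (n + i + n + 1) * qp ((p ^ (n + 1)) ^ 2 * p ^ i) p m := by
  have hbase : p * p ^ (n + i + n + 1) = (p ^ (n + 1)) ^ 2 * p ^ i := by ring
  rw [show n + (m + 1) + (n + i) = n + i + n + 1 + m by omega, qp_add, hbase]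

lemma exists_linvCoeff_mul_lmCoeff_eq (hq : ¬IsOfFinOrder (q ^ 2)) (n m : ℕ) :
    ∃ c : ℂ, ∀ i j : ℕ, i + j = m + 1 →
      linvCoeff q (n + (m + 1)) (n + i) * lmCoeff q (n + i) n =
        c * (qp (((q ^ 2) ^ (n + 1)) ^ 2 * (q ^ 2) ^ i) (q ^ 2) m *
          ((q ^ 2) ^ (n + (m + 1))) ^ j) := by
  refine ⟨q ^ (m + 1) * qp (q ^ 2) (q ^ 2) (n + (m + 1)) * qp (q ^ 2) (q ^ 2) (2 * n + 1) /
    (qp (q ^ 2) (q ^ 2) (2 * (n + (m + 1))) * qp (q ^ 2) (q ^ 2) n), fun i j hij => ?_⟩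
  have h₁ := qp_self_ne_zero hq (n + i)
  have h₂ := qp_self_ne_zero hq (n + i + n + 1)
  have hpow : q ^ (m + 1) = q ^ i * q ^ j := by rw [← hij, pow_add]
  rw [linvCoeff, lmCoeff, zpow_two_mul_add_one_mul_sub q hij, zpow_add_sub_left, qp_self_add, hpow]
  generalize ((q ^ 2) ^ (n + (m + 1))) ^ j = s,
    qp (((q ^ 2) ^ (n + 1)) ^ 2 * (q ^ 2) ^ i) (q ^ 2) m = t
  field_simp

theorem Linv_mul_Lm (hq₀ : q ≠ 0) (hq : ¬IsOfFinOrder q) (L : ℕ)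
    {C : ℂ → ℂ → ℕ → Polynomial ℂ} (hC : IsUltra C) (x : ℂ) :
    Linv q L C x * Lm q L C x = 1 := by
  have hp : ¬IsOfFinOrder (q ^ 2) := fun h => hq (h.of_pow two_ne_zero)
  rw [Linv_eq_lowerTriangular, Lm_eq_lowerTriangular]
  refine lowerTriangular_mul_eq_one _ (fun n => ?_) fun n m => ?_
  · simp only [linvCoeff_self hp, lmCoeff_self hp, Nat.sub_self, hC.eval_zero, mul_one]
  · obtain ⟨c, hc⟩ := exists_linvCoeff_mul_lmCoeff_eq hp n m
    rw [← mul_zero c, ← hC.sum_antidiagonal_eq_zero (pow_ne_zero 2 hq₀) hp (n + 1) m x,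
      Finset.mul_sum]
    refine Finset.sum_congr rfl fun ⟨i, j⟩ hij => ?_
    rw [HasAntidiagonal.mem_antidiagonal] at hij
    have hβ : q ^ (2 * n + 2) = (q ^ 2) ^ (n + 1) := by rw [← pow_mul, mul_add_one]
    have hβ' : q ^ (-(2 * ((n + (m + 1) : ℕ) : ℤ))) = ((q ^ 2) ^ (n + (m + 1)))⁻¹ := by
      rw [_root_.zpow_neg, ← pow_mul, ← zpow_natCast, Nat.cast_mul, Nat.cast_two]
    rw [mul_mul_mul_comm, hc i j hij, hβ, hβ', Nat.add_sub_cancel_left,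
      show n + (m + 1) - (n + i) = j by omega, show n + 1 + m = n + (m + 1) by omega,
      mul_comm (Polynomial.eval _ _) (Polynomial.eval _ _), mul_assoc]

end Inverse

theorem stmt8_general {q : ℂ} (hq₀ : q ≠ 0) (hq : ¬IsOfFinOrder q) (L : ℕ)
    {C : ℂ → ℂ → ℕ → Polynomial ℂ} (hC : IsUltra C) (x : ℂ) :
    Lm q L C x * Linv q L C x = 1 :=
  mul_eq_one_comm.mp (Linv_mul_Lm hq₀ hq L hC x)

/-- the explicit matrix `M(x)` (here `Linv`) with entries built from
continuous q-ultraspherical polynomials with parameter `q^{-2k}` is the inverse of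
`L(x)`: `L(x) M(x) = I` for every `x`. -/
theorem stmt8 (q : ℝ) (hq0 : 0 < q) (hq1 : q < 1) (L : ℕ)
    (C : ℂ → ℂ → ℕ → Polynomial ℂ) (hC : IsUltra C) :
    ∀ x : ℂ, Lm (q : ℂ) L C x * Linv (q : ℂ) L C x = 1 := by
  intro x
  have hq : ¬IsOfFinOrder (q : ℂ) := fun h => by simpa [abs_of_pos hq0, hq1.ne] using h.norm_eq_one
  exact stmt8_general (Complex.ofReal_ne_zero.mpr hq0.ne') hq L hC x

end
end
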